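/- arXiv:0909.4865 — 4 statements merged into one kernel-verified Lean document; each statement's English description precedes it below -/
import Mathlib

section
/- Every nonzero real binary form of degree d has real rank at most d; that is, for every nonzero homogeneous polynomial f ∈ ℝ[x,y] of degree d ≥ 1 there exist real linear forms ℓ₁,…,ℓ_d and real numbers c₁,…,c_d such that f = ∑_{j=1}^d c_j ℓ_j^d. -/
open MvPolynomial

noncomputable section

/-- The real linear binary form `a·x + b·y`. -/
def lin (a b : ℝ) : MvPolynomial (Fin 2) ℝ := C a * X 0 + C b * X 1

/-- `f` is a sum of `r` terms `cⱼ · ℓⱼ^d` with `ℓⱼ` nonzero real linear forms. -/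
def HasDecomp (f : MvPolynomial (Fin 2) ℝ) (d r : ℕ) : Prop :=
  ∃ c a b : Fin r → ℝ, (∀ j, (a j, b j) ≠ (0, 0)) ∧
    f = ∑ j, C (c j) * lin (a j) (b j) ^ d

/-- The real (symmetric) rank of a binary form of degree `d`:
the least number of `d`-th powers of real linear forms needed to write `f`. -/
def realRank (f : MvPolynomial (Fin 2) ℝ) (d : ℕ) : ℕ :=
  sInf {r | HasDecomp f d r}

/-- The set of real projective roots of a binary form. -/
def projRoots (f : MvPolynomial (Fin 2) ℝ) : Set (Projectivization ℝ (Fin 2 → ℝ)) :=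
  {p | eval p.rep f = 0}

/-- `f` is a product of `d` pairwise non-proportional real linear forms,
i.e. `f` has `d` distinct real roots. -/
def SplitsDistinct (f : MvPolynomial (Fin 2) ℝ) (d : ℕ) : Prop :=
  ∃ a b : Fin d → ℝ, (∀ j, (a j, b j) ≠ (0, 0)) ∧
    (∀ i j, i ≠ j → a i * b j ≠ a j * b i) ∧
    f = ∏ j, lin (a j) (b j)

/-- `f` has distinct roots, i.e. it is squarefree as a complex polynomial. -/
def SquarefreeC (f : MvPolynomial (Fin 2) ℝ) : Prop :=
  Squarefree (MvPolynomial.map (algebraMap ℝ ℂ) f)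

/-- The linear change of variables of `f` by the matrix `A`: `f(A(x,y))`. -/
def subst (A : Matrix (Fin 2) (Fin 2) ℝ) (f : MvPolynomial (Fin 2) ℝ) :
    MvPolynomial (Fin 2) ℝ :=
  aeval (fun i => C (A i 0) * X 0 + C (A i 1) * X 1) f

/-- The complex rank of a real binary form of degree `d`. -/
def complexRank (f : MvPolynomial (Fin 2) ℝ) (d : ℕ) : ℕ :=
  sInf {r | ∃ a b : Fin r → ℂ, (∀ j, (a j, b j) ≠ (0, 0)) ∧
    MvPolynomial.map (algebraMap ℝ ℂ) f = ∑ j, (C (a j) * X 0 + C (b j) * X 1) ^ d}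

/-!
Scaling the coefficients of a form `f` of degree `d` by inverse binomials turns it into a linear
functional `L` on polynomials of degree at most `d`. If `L` annihilates `∏ (X - tⱼ)` for distinct
`t₁, …, t_d`, then `L` only sees the values at the `tⱼ`, so `L p = ∑ cⱼ p(tⱼ)`; on the monomials
`X ^ k` this says `f = ∑ cⱼ (tⱼ x + y) ^ d` (Sylvester's apolarity).

To find the nodes, choose `s₁, …, s_{d-1}` and put `N = ∏ (X - sᵢ)`. As `L ((X - u) N)` is affine in
`u`, it vanishes for `u = L (X N) / L N`, and this `u` differs from each `sᵢ` as soon as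
`L ((X - sᵢ) N) ≠ 0`. All these conditions on `s` are nonvanishing conditions on polynomials in `s`,
so over an infinite field they hold simultaneously once each of them holds somewhere; the last one
can be tested at points with all `sᵢ` equal. This breaks down only if `L` kills all degrees below
`d`, in which case `f` is a multiple of `x ^ d`.
-/

open Finset Lagrange
open scoped Polynomial

section LinearFunctional

lemma nodal_univ_cons {R : Type*} [CommRing R] {n : ℕ} (a : R) (s : Fin n → R) :
    nodal univ (Fin.cons a s : Fin (n + 1) → R) =
      (Polynomial.X - Polynomial.C a) * nodal univ s := by
  simp only [nodal, Fin.prod_univ_succ, Fin.cons_zero, Fin.cons_succ]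

lemma exists_apply_nodal_ne_zero {R M : Type*} [CommRing R] [AddCommGroup M] [Module R M]
    {n : ℕ} (L : R[X] →ₗ[R] M) {p : R[X]} (hp : p.natDegree ≤ n) (hLp : L p ≠ 0) :
    ∃ s : Fin n → R, L (nodal univ s) ≠ 0 := by
  induction n generalizing L p with
  | zero =>
    refine ⟨Fin.elim0, fun h => hLp ?_⟩
    rw [Polynomial.eq_C_of_natDegree_le_zero hp, ← mul_one (Polynomial.C _),
      ← Polynomial.smul_eq_C_mul, map_smul]
    simpa [nodal] using congrArg (p.coeff 0 • ·) h
  | succ n ih =>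
    by_contra! hL
    have apply_mul (a : R) (q : R[X]) (hq : q.natDegree ≤ n) :
        L ((Polynomial.X - Polynomial.C a) * q) = 0 := by
      by_contra hne
      obtain ⟨s, hs⟩ := ih (L ∘ₗ LinearMap.mulLeft R (Polynomial.X - Polynomial.C a)) hq hne
      exact hs (by simpa [nodal_univ_cons] using hL (Fin.cons a s))
    have apply_X_mul (q : R[X]) (hq : q.natDegree ≤ n) : L (Polynomial.X * q) = 0 := by
      simpa using apply_mul 0 q hq
    have apply_low (q : R[X]) (hq : q.natDegree ≤ n) : L q = 0 := by
      simpa [sub_mul, apply_X_mul q hq] using apply_mul 1 q hq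
    refine hLp ?_
    have natDegree_divX : p.divX.natDegree ≤ n := by
      rw [Polynomial.natDegree_divX_eq_natDegree_tsub_one]
      omega
    rw [← p.X_mul_divX_add, map_add, apply_X_mul _ natDegree_divX, apply_low _ (by simp), add_zero]

lemma exists_eval_eq_apply_map {R σ : Type*} [CommSemiring R] (L : R[X] →ₗ[R] R)
    (Q : (MvPolynomial σ R)[X]) :
    ∃ P : MvPolynomial σ R, ∀ s : σ → R, eval s P = L (Q.map (eval s)) := by
  induction Q using Polynomial.induction_on' with
  | add Q₁ Q₂ ih₁ ih₂ =>
    obtain ⟨P₁, hP₁⟩ := ih₁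
    obtain ⟨P₂, hP₂⟩ := ih₂
    exact ⟨P₁ + P₂, fun s => by simp only [map_add, Polynomial.map_add, hP₁, hP₂]⟩
  | monomial k a =>
    refine ⟨a * C (L (Polynomial.X ^ k)), fun s => ?_⟩
    rw [Polynomial.map_monomial, ← Polynomial.smul_X_eq_monomial, map_smul, smul_eq_mul, map_mul,
      eval_C]

lemma exists_apply_X_add_C_pow_ne_zero {R : Type*} [CommRing R] [IsDomain R] [Infinite R]
    {d : ℕ} (hchoose : ∀ k ≤ d, (d.choose k : R) ≠ 0) (L : R[X] →ₗ[R] R) {p : R[X]}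
    (hp : p.natDegree ≤ d) (hLp : L p ≠ 0) :
    ∃ a : R, L ((Polynomial.X + Polynomial.C a) ^ d) ≠ 0 := by
  by_contra! hL
  let Q : R[X] := ∑ ij ∈ antidiagonal d,
    Polynomial.monomial ij.2 (d.choose ij.1 * L (Polynomial.X ^ ij.1))
  have eval_Q (a : R) : Q.eval a = L ((Polynomial.X + Polynomial.C a) ^ d) := by
    rw [(Commute.all _ _).add_pow', map_sum, Polynomial.eval_finsetSum]
    refine sum_congr rfl fun ij _ => ?_
    rw [← Polynomial.C_pow, mul_comm (Polynomial.X ^ _), ← Polynomial.smul_eq_C_mul, map_nsmul,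
      map_smul, Polynomial.eval_monomial, nsmul_eq_mul, smul_eq_mul]
    ring
  have Q_eq_zero : Q = 0 := Polynomial.funext fun a => by rw [eval_Q, hL, Polynomial.eval_zero]
  have apply_X_pow (k : ℕ) (hk : k ≤ d) : L (Polynomial.X ^ k) = 0 := by
    have coeff_Q : Q.coeff (d - k) = d.choose k * L (Polynomial.X ^ k) := by
      rw [Polynomial.finsetSum_coeff, sum_eq_single_of_mem (k, d - k) (by simp [hk]),
        Polynomial.coeff_monomial_same]
      rintro ⟨i, j⟩ hij hne
      refine Polynomial.coeff_monomial_of_ne _ fun h => hne ?_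
      rw [HasAntidiagonal.mem_antidiagonal] at hij
      grind
    rw [Q_eq_zero, Polynomial.coeff_zero] at coeff_Q
    exact (mul_eq_zero.mp coeff_Q.symm).resolve_left (hchoose k hk)
  refine hLp ?_
  rw [p.as_sum_range' (d + 1) (by omega), map_sum]
  refine sum_eq_zero fun k hk => ?_
  rw [← Polynomial.smul_X_eq_monomial, map_smul,
    apply_X_pow k (Nat.le_of_lt_succ (mem_range.mp hk)), smul_zero]

lemma exists_injective_apply_nodal_ne_zero {R : Type*} [CommRing R] [IsDomain R] [Infinite R]
    {n : ℕ} (L : R[X] →ₗ[R] R)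
    (hlow : ∃ s : Fin n → R, L (nodal univ s) ≠ 0)
    (hpow : ∃ a : R, L ((Polynomial.X + Polynomial.C a) ^ (n + 1)) ≠ 0) :
    ∃ s : Fin n → R, Function.Injective s ∧ L (nodal univ s) ≠ 0 ∧
      ∀ i, L ((Polynomial.X - Polynomial.C (s i)) * nodal univ s) ≠ 0 := by
  let N : (MvPolynomial (Fin n) R)[X] := nodal univ X
  have map_eval_N (s : Fin n → R) : N.map (eval s) = nodal univ s := by
    simp [N, nodal, Polynomial.map_prod]
  obtain ⟨P, hP⟩ := exists_eval_eq_apply_map L N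
  choose P' hP' using fun i : Fin n =>
    exists_eval_eq_apply_map L ((Polynomial.X - Polynomial.C (X i)) * N)
  simp only [Polynomial.map_mul, Polynomial.map_sub, Polynomial.map_X, Polynomial.map_C, eval_X,
    map_eval_N] at hP hP'
  have P_ne_zero : P ≠ 0 := by
    rintro rfl
    obtain ⟨s, hs⟩ := hlow
    exact hs (by rw [← hP, map_zero])
  have P'_ne_zero (i : Fin n) : P' i ≠ 0 := by
    intro h
    obtain ⟨a, ha⟩ := hpow
    refine ha ?_
    -- With all nodes equal to `-a`, the product `(X - sᵢ) N` is `(X + a) ^ (n + 1)`.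
    have eval_const := hP' i fun _ => -a
    simpa [h, nodal, ← pow_succ', eq_comm] using eval_const
  let D : MvPolynomial (Fin n) R := ∏ ij ∈ univ.offDiag, (X ij.1 - X ij.2)
  have D_ne_zero : D ≠ 0 := prod_ne_zero_iff.mpr fun ij hij =>
    sub_ne_zero.mpr (X_injective.ne (mem_offDiag.mp hij).2.2)
  have condition_ne_zero : D * P * ∏ i, P' i ≠ 0 :=
    mul_ne_zero (mul_ne_zero D_ne_zero P_ne_zero) (prod_ne_zero_iff.mpr fun i _ => P'_ne_zero i)
  obtain ⟨s, hs⟩ := not_forall.mp (mt MvPolynomial.funext_iff.mpr condition_ne_zero)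
  simp only [D, map_zero, ← ne_eq, map_mul, map_prod, map_sub, eval_X, hP, hP', mul_ne_zero_iff,
    prod_ne_zero_iff, mem_offDiag, mem_univ, true_and, true_imp_iff, sub_ne_zero,
    Prod.forall] at hs
  obtain ⟨⟨hinj, hs₀⟩, hs₁⟩ := hs
  exact ⟨s, fun i j hij => by_contra fun hne => hinj i j hne hij, hs₀, hs₁⟩

variable {K : Type*} [Field K]

lemma exists_injective_apply_nodal_eq_zero [Infinite K] {n : ℕ} (L : K[X] →ₗ[K] K)
    (hchoose : ∀ k ≤ n + 1, ((n + 1).choose k : K) ≠ 0)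
    {p : K[X]} (hp : p.natDegree ≤ n) (hLp : L p ≠ 0) :
    ∃ t : Fin (n + 1) → K, Function.Injective t ∧ L (nodal univ t) = 0 := by
  obtain ⟨s, hs, hN, hsep⟩ := exists_injective_apply_nodal_ne_zero L
    (exists_apply_nodal_ne_zero L hp hLp)
    (exists_apply_X_add_C_pow_ne_zero hchoose L (hp.trans n.le_succ) hLp)
  set N := nodal univ s
  have apply_mul (u : K) :
      L ((Polynomial.X - Polynomial.C u) * N) = L (Polynomial.X * N) - u * L N := by
    rw [sub_mul, map_sub, ← Polynomial.smul_eq_C_mul, map_smul, smul_eq_mul]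
  have apply_root : L ((Polynomial.X - Polynomial.C (L (Polynomial.X * N) / L N)) * N) = 0 := by
    rw [apply_mul, div_mul_cancel₀ _ hN, sub_self]
  refine ⟨Fin.cons (L (Polynomial.X * N) / L N) s, Fin.cons_injective_iff.mpr ⟨?_, hs⟩, ?_⟩
  · rintro ⟨i, hi⟩
    exact hsep i (hi ▸ apply_root)
  · rw [nodal_univ_cons, apply_root]

lemma exists_apply_eq_sum_mul_eval {ι : Type*} [Fintype ι] (L : K[X] →ₗ[K] K) {t : ι → K}
    (ht : Function.Injective t) (hL : L (nodal univ t) = 0) :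
    ∃ c : ι → K, ∀ p : K[X], p.natDegree ≤ Fintype.card ι → L p = ∑ j, c j * p.eval (t j) := by
  classical
  have monic_N : (nodal univ t).Monic := nodal_monic
  refine ⟨fun j => L (Lagrange.basis univ t j), fun p hp => ?_⟩
  have apply_mod : L (p %ₘ nodal univ t) = L p := by
    have natDegree_div : (p /ₘ nodal univ t).natDegree = 0 := by
      rw [Polynomial.natDegree_divByMonic _ monic_N, natDegree_nodal, card_univ]
      omega
    obtain ⟨a, ha⟩ := Polynomial.natDegree_eq_zero.mp natDegree_div
    rw [Polynomial.modByMonic_eq_sub_mul_div, ← ha, mul_comm, ← Polynomial.smul_eq_C_mul,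
      map_sub, map_smul, hL, smul_zero, sub_zero]
  have eval_mod (j : ι) : (p %ₘ nodal univ t).eval (t j) = p.eval (t j) := by
    rw [Polynomial.modByMonic_eq_sub_mul_div, Polynomial.eval_sub, Polynomial.eval_mul,
      eval_nodal_at_node (mem_univ j), zero_mul, sub_zero]
  have degree_mod : (p %ₘ nodal univ t).degree < #(univ : Finset ι) := by
    simpa only [degree_nodal] using Polynomial.degree_modByMonic_lt p monic_N
  rw [← apply_mod, eq_interpolate ht.injOn degree_mod, interpolate_apply, map_sum]
  refine sum_congr rfl fun j _ => ?_
  rw [← Polynomial.smul_eq_C_mul, map_smul, smul_eq_mul, eval_mod, mul_comm]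

end LinearFunctional

section BinaryForm

lemma eq_sum_antidiagonal_of_isHomogeneous {R : Type*} [CommSemiring R] {d : ℕ}
    {f : MvPolynomial (Fin 2) R} (hf : f.IsHomogeneous d) :
    f = ∑ ij ∈ antidiagonal d,
      C (coeff (Finsupp.single 0 ij.1 + Finsupp.single 1 ij.2) f) * (X 0 ^ ij.1 * X 1 ^ ij.2) := by
  have C_mul_eq_monomial (ij : ℕ × ℕ) (r : R) : C r * (X 0 ^ ij.1 * X 1 ^ ij.2) =
      monomial (Finsupp.single (0 : Fin 2) ij.1 + Finsupp.single 1 ij.2) r := by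
    rw [X_pow_eq_monomial, X_pow_eq_monomial, monomial_mul, C_mul_monomial, mul_one, mul_one]
  ext m
  have exponent_eq_iff (ij : ℕ × ℕ) :
      Finsupp.single 0 ij.1 + Finsupp.single 1 ij.2 = m ↔ ij = (m 0, m 1) := by
    simp [Finsupp.ext_iff, Fin.forall_fin_two, Prod.ext_iff]
  simp only [C_mul_eq_monomial, coeff_sum, coeff_monomial, exponent_eq_iff, sum_ite_eq',
    HasAntidiagonal.mem_antidiagonal, (exponent_eq_iff (m 0, m 1)).mpr rfl]
  split_ifs with hm
  · rfl
  · refine hf.coeff_eq_zero fun h => hm ?_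
    rwa [Finsupp.degree_eq_sum, Fin.sum_univ_two] at h

variable {K : Type*} [Field K]

/-- The linear functional on univariate polynomials that represents a binary form `f` of degree `d`
in apolarity theory: its value at `X ^ k` is the coefficient of `x ^ k y ^ (d - k)` in `f`,
normalised by `d.choose k`. For `k > d` the binomial is `0`, and division by it gives `0`. -/
def apolarFunctional (d : ℕ) (f : MvPolynomial (Fin 2) K) : K[X] →ₗ[K] K :=
  (Polynomial.basisMonomials K).constr K fun k =>
    coeff (Finsupp.single 0 k + Finsupp.single 1 (d - k)) f / d.choose k

lemma choose_mul_apolarFunctional_X_pow {i j : ℕ} (hchoose : ((i + j).choose i : K) ≠ 0)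
    (f : MvPolynomial (Fin 2) K) :
    (i + j).choose i * apolarFunctional (i + j) f (Polynomial.X ^ i) =
      coeff (Finsupp.single 0 i + Finsupp.single 1 j) f := by
  have X_pow_eq : Polynomial.X ^ i = Polynomial.basisMonomials K i := by
    simp only [Polynomial.coe_basisMonomials, Polynomial.monomial_one_right_eq_X_pow]
  rw [apolarFunctional, X_pow_eq, Module.Basis.constr_basis, Nat.add_sub_cancel_left,
    mul_div_cancel₀ _ hchoose]

variable {d : ℕ} {f : MvPolynomial (Fin 2) K}

lemma eq_sum_apolarFunctional (hchoose : ∀ k ≤ d, (d.choose k : K) ≠ 0)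
    (hf : f.IsHomogeneous d) :
    f = ∑ ij ∈ antidiagonal d,
      C (d.choose ij.1 * apolarFunctional d f (Polynomial.X ^ ij.1)) *
        (X 0 ^ ij.1 * X 1 ^ ij.2) := by
  conv_lhs => rw [eq_sum_antidiagonal_of_isHomogeneous hf]
  refine sum_congr rfl fun ij hij => ?_
  obtain rfl := HasAntidiagonal.mem_antidiagonal.mp hij
  rw [choose_mul_apolarFunctional_X_pow (hchoose _ (Nat.le_add_right _ _))]

lemma eq_sum_pow_of_apolarFunctional_X_pow_eq {ι : Type*} [Fintype ι]
    (hchoose : ∀ k ≤ d, (d.choose k : K) ≠ 0) (hf : f.IsHomogeneous d) {c t : ι → K}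
    (hct : ∀ k ≤ d, apolarFunctional d f (Polynomial.X ^ k) = ∑ j, c j * t j ^ k) :
    f = ∑ j, C (c j) * (C (t j) * X 0 + X 1) ^ d := by
  simp only [fun j => (Commute.all (C (t j) * X (0 : Fin 2)) (X 1)).add_pow' d, mul_sum]
  rw [sum_comm]
  conv_lhs => rw [eq_sum_apolarFunctional hchoose hf]
  refine sum_congr rfl fun ij hij => ?_
  rw [hct _ (HasAntidiagonal.antidiagonal.fst_le hij), mul_sum, map_sum, sum_mul]
  refine sum_congr rfl fun j _ => ?_
  simp only [nsmul_eq_mul, map_mul, map_pow, map_natCast]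
  ring

lemma exists_eq_C_mul_X_pow_of_apolarFunctional_eq_zero (hchoose : ∀ k ≤ d, (d.choose k : K) ≠ 0)
    (hf : f.IsHomogeneous d) (hL : ∀ k < d, apolarFunctional d f (Polynomial.X ^ k) = 0) :
    ∃ b : K, f = C b * X 0 ^ d := by
  refine ⟨d.choose d * apolarFunctional d f (Polynomial.X ^ d), ?_⟩
  conv_lhs => rw [eq_sum_apolarFunctional hchoose hf]
  rw [sum_eq_single_of_mem (d, 0) (by simp), pow_zero, mul_one]
  intro ij hij hne
  have fst_lt : ij.1 < d := by
    refine (HasAntidiagonal.antidiagonal.fst_le hij).lt_of_ne fun h => hne ?_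
    rw [HasAntidiagonal.mem_antidiagonal] at hij
    exact Prod.ext h (by grind)
  rw [hL _ fst_lt, mul_zero, map_zero, zero_mul]

end BinaryForm

theorem stmt0_general {K : Type*} [Field K] [Infinite K] {d : ℕ} (hd : 1 ≤ d)
    (hchoose : ∀ k ≤ d, (d.choose k : K) ≠ 0) {f : MvPolynomial (Fin 2) K}
    (hf : f.IsHomogeneous d) :
    ∃ c a b : Fin d → K, (∀ j, (a j, b j) ≠ (0, 0)) ∧
      f = ∑ j, C (c j) * (C (a j) * X 0 + C (b j) * X 1) ^ d := by
  obtain ⟨n, rfl⟩ := Nat.exists_eq_add_of_le' hd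
  by_cases hL : ∀ k < n + 1, apolarFunctional (n + 1) f (Polynomial.X ^ k) = 0
  · obtain ⟨b, rfl⟩ := exists_eq_C_mul_X_pow_of_apolarFunctional_eq_zero hchoose hf hL
    exact ⟨Pi.single 0 b, 1, 0, by simp, by simp [Fin.sum_univ_succ]⟩
  · push Not at hL
    obtain ⟨k, hk, hLk⟩ := hL
    obtain ⟨t, ht, hLt⟩ := exists_injective_apply_nodal_eq_zero _ hchoose
      ((Polynomial.natDegree_X_pow_le k).trans (Nat.le_of_lt_succ hk)) hLk
    obtain ⟨c, hc⟩ := exists_apply_eq_sum_mul_eval _ ht hLt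
    refine ⟨c, t, 1, by simp, ?_⟩
    simpa using eq_sum_pow_of_apolarFunctional_X_pow_eq hchoose hf fun k hk => by
      simpa using hc (Polynomial.X ^ k) (by simpa using hk)

/-- every nonzero real binary form of degree `d ≥ 1` is a sum of `d`
terms `cⱼ ℓⱼ^d` with real linear forms `ℓⱼ`, i.e. its real rank is at most `d`. -/
theorem stmt0 (d : ℕ) (hd : 1 ≤ d) (f : MvPolynomial (Fin 2) ℝ) (hf0 : f ≠ 0)
    (hf : f.IsHomogeneous d) :
    ∃ c a b : Fin d → ℝ, (∀ j, (a j, b j) ≠ (0, 0)) ∧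
      f = ∑ j, C (c j) * lin (a j) (b j) ^ d :=
  stmt0_general hd (fun _ hk => Nat.cast_ne_zero.mpr (Nat.choose_ne_zero hk)) hf
end
end

section
/- Let f be a real binary cubic form with distinct roots (squarefree over ℂ). Then the following are equivalent: (1) the real rank of f is 2; (2) Δ(f) < 0; (3) f has exactly one real root. -/
open MvPolynomial

noncomputable section

/-!
A real binary cubic `f` has a real linear factor, `f = ℓ * q`, and `Δ(f)` is `1 / 27` times the
discriminant of `q` times the square of the value of `q` at the root of `ℓ`. A quadratic form of
negative discriminant has no real root, so `Δ(f) < 0` exactly when `q` has negative discriminant.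
In that case `ℓ` carries the only real root; otherwise `q` splits, and a squarefree `f` has three
distinct real roots.

For the rank, let `H` be the Hessian of `f`, a quadratic form of discriminant `-Δ(f)`. If
`Δ(f) < 0`, then `H` is a product of two non-proportional real linear forms, and by Sylvester's
apolarity argument `f` is a linear combination of their cubes. Conversely, the discriminant of
`c ℓ₁³ + d ℓ₂³` is `-(c d det(ℓ₁, ℓ₂)³)²`, which is negative unless `f` has rank at most one.
-/

section Plane

variable {K : Type*} [Field K]

lemma exists_smul_eq_iff {a b : K} (hab : (a, b) ≠ (0, 0)) (w : Fin 2 → K) :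
    (∃ k : K, k • ![a, b] = w) ↔ a * w 1 = b * w 0 := by
  constructor
  · rintro ⟨k, rfl⟩
    simp only [Pi.smul_apply, smul_eq_mul, Matrix.cons_val_zero, Matrix.cons_val_one]
    ring
  · intro h
    rcases not_and_or.mp (mt Prod.mk_eq_zero.mpr hab) with ha | hb
    · have hw₁ : w 0 / a * b = w 1 := by
        field_simp
        linear_combination -h
      exact ⟨w 0 / a, _root_.funext (Fin.forall_fin_two.mpr ⟨div_mul_cancel₀ _ ha, hw₁⟩)⟩
    · have hw₀ : w 1 / b * a = w 0 := by
        field_simp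
        linear_combination h
      exact ⟨w 1 / b, _root_.funext (Fin.forall_fin_two.mpr ⟨hw₀, div_mul_cancel₀ _ hb⟩)⟩

lemma exists_eq_mul_sq_of_mul_eq_mul {p q b₀ b₁ b₂ : K} (hpq : (p, q) ≠ (0, 0))
    (h₀ : q * b₀ = p * b₁) (h₁ : q * b₁ = p * b₂) :
    ∃ k, b₀ = k * p ^ 2 ∧ b₁ = k * (p * q) ∧ b₂ = k * q ^ 2 := by
  rcases not_and_or.mp (mt Prod.mk_eq_zero.mpr hpq) with hp | hq
  · refine ⟨b₀ / p ^ 2, ?_, ?_, ?_⟩ <;> field_simp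
    · linear_combination -h₀
    · linear_combination -q * h₀ - p * h₁
  · refine ⟨b₂ / q ^ 2, ?_, ?_, ?_⟩ <;> field_simp
    · linear_combination q * h₀ + p * h₁
    · linear_combination h₁

lemma exists_factors_of_discrim_eq_mul_self [NeZero (2 : K)] {a b c t : K}
    (h : discrim a b c = t * t) :
    ∃ p q r s, a = p * r ∧ b = p * s + q * r ∧ c = q * s := by
  have h2 : (2 : K) ≠ 0 := NeZero.ne 2
  by_cases ha : a = 0
  · exact ⟨0, 1, b, c, by simp [ha], by ring, by ring⟩
  · refine ⟨a, (b - t) / 2, 1, (b + t) / (2 * a), by ring, ?_, ?_⟩ <;> field_simp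
    · ring
    · unfold discrim at h
      linear_combination -h

end Plane

lemma quadraticForm_ne_zero_of_discrim_neg {R : Type*} [CommRing R] [LinearOrder R]
    [IsStrictOrderedRing R] {a b c x y : R} (h : discrim a b c < 0) (hxy : (x, y) ≠ (0, 0)) :
    a * x ^ 2 + b * x * y + c * y ^ 2 ≠ 0 := by
  intro h0
  have hx : discrim a b c * x ^ 2 = (b * x + 2 * c * y) ^ 2 := by
    unfold discrim
    linear_combination -4 * c * h0
  have hy : discrim a b c * y ^ 2 = (2 * a * x + b * y) ^ 2 := by
    unfold discrim
    linear_combination -4 * a * h0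
  have eq_zero {z t : R} (hz : discrim a b c * z ^ 2 = t ^ 2) : z = 0 := by
    by_contra hne
    exact (mul_neg_of_neg_of_pos h (sq_pos_of_ne_zero hne)).not_ge (hz ▸ sq_nonneg t)
  exact hxy (Prod.ext (eq_zero hx) (eq_zero hy))

section LinearForms

lemma eval_lin (a b : ℝ) (w : Fin 2 → ℝ) : eval w (lin a b) = a * w 0 + b * w 1 := by
  simp [lin]

lemma exists_lin_eq_C_mul_lin {a b c d : ℝ} (hab : (a, b) ≠ (0, 0)) (h : a * d = b * c) :
    ∃ k, lin c d = C k * lin a b := by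
  obtain ⟨k, hk⟩ := (exists_smul_eq_iff hab ![c, d]).mpr h
  have hc : k * a = c := congrFun hk 0
  have hd : k * b = d := congrFun hk 1
  refine ⟨k, ?_⟩
  simp only [lin, ← hc, ← hd, C_mul]
  ring

lemma not_squarefreeC_of_lin_mul_lin_dvd {a b : ℝ} {f : MvPolynomial (Fin 2) ℝ}
    (h : lin a b * lin a b ∣ f) : ¬ SquarefreeC f := by
  intro hf
  have hunit : IsUnit (MvPolynomial.map (algebraMap ℝ ℂ) (lin a b)) :=
    hf _ (by simpa only [map_mul] using map_dvd (MvPolynomial.map (algebraMap ℝ ℂ)) h)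
  simpa [lin] using hunit.map (eval (0 : Fin 2 → ℂ))

lemma splitsDistinct_of_squarefreeC {f : MvPolynomial (Fin 2) ℝ} {d : ℕ} {a b : Fin d → ℝ}
    (hsf : SquarefreeC f) (hf : f = ∏ j, lin (a j) (b j)) : SplitsDistinct f d := by
  have hne (j : Fin d) : (a j, b j) ≠ (0, 0) := by
    intro hj
    obtain ⟨ha, hb⟩ := Prod.mk_eq_zero.mp hj
    have hlin : lin (a j) (b j) = 0 := by simp [lin, ha, hb]
    refine not_squarefreeC_of_lin_mul_lin_dvd (a := 0) (b := 0) ?_ hsf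
    rw [hf, Finset.prod_eq_zero (Finset.mem_univ j) hlin]
    exact dvd_zero _
  refine ⟨a, b, hne, fun i j hij hprop => ?_, hf⟩
  obtain ⟨k, hk⟩ := exists_lin_eq_C_mul_lin (hne i) (hprop.trans (mul_comm _ _))
  have hsq : lin (a i) (b i) * lin (a i) (b i) ∣ lin (a i) (b i) * lin (a j) (b j) := by
    rw [hk]
    exact mul_dvd_mul_left _ (dvd_mul_left _ _)
  have hpair : lin (a i) (b i) * lin (a j) (b j) ∣ f := by
    rw [hf, ← Finset.prod_pair (f := fun l => lin (a l) (b l)) hij]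
    exact Finset.prod_dvd_prod_of_subset _ _ _ (Finset.subset_univ _)
  exact not_squarefreeC_of_lin_mul_lin_dvd (hsq.trans hpair) hsf

lemma mem_projRoots {f : MvPolynomial (Fin 2) ℝ} {p : Projectivization ℝ (Fin 2 → ℝ)} :
    p ∈ projRoots f ↔ eval p.rep f = 0 :=
  Iff.rfl

/-- The real projective root `[b : -a]` of the nonzero linear form `a·x + b·y`. -/
def linRoot (a b : ℝ) (hab : (a, b) ≠ (0, 0)) : Projectivization ℝ (Fin 2 → ℝ) :=
  Projectivization.mk ℝ ![b, -a] fun h =>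
    hab (Prod.ext (neg_eq_zero.mp (congrFun h 1)) (congrFun h 0))

lemma mk_eq_linRoot_iff {a b : ℝ} (hab : (a, b) ≠ (0, 0)) {w : Fin 2 → ℝ} (hw : w ≠ 0) :
    Projectivization.mk ℝ w hw = linRoot a b hab ↔ a * w 0 + b * w 1 = 0 := by
  have hba : (b, -a) ≠ (0, 0) := by simpa [and_comm] using hab
  rw [linRoot, Projectivization.mk_eq_mk_iff', exists_smul_eq_iff hba, neg_mul,
    eq_neg_iff_add_eq_zero, add_comm]

lemma eval_rep_lin_eq_zero_iff {a b : ℝ} (hab : (a, b) ≠ (0, 0))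
    (p : Projectivization ℝ (Fin 2 → ℝ)) : eval p.rep (lin a b) = 0 ↔ p = linRoot a b hab := by
  rw [eval_lin, ← mk_eq_linRoot_iff hab p.rep_nonzero, p.mk_rep]

lemma linRoot_eq_linRoot_iff {a b c d : ℝ} (hab : (a, b) ≠ (0, 0)) (hcd : (c, d) ≠ (0, 0)) :
    linRoot a b hab = linRoot c d hcd ↔ a * d = c * b := by
  rw [linRoot, mk_eq_linRoot_iff]
  simp only [Matrix.cons_val_zero, Matrix.cons_val_one]
  constructor <;> intro h <;> linear_combination -h

theorem ncard_projRoots_of_splitsDistinct {f : MvPolynomial (Fin 2) ℝ} {d : ℕ}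
    (h : SplitsDistinct f d) : (projRoots f).ncard = d := by
  obtain ⟨a, b, hne, hdist, rfl⟩ := h
  have hrange : projRoots (∏ j, lin (a j) (b j)) =
      Set.range fun j => linRoot (a j) (b j) (hne j) := by
    ext p
    simp only [mem_projRoots, map_prod, Finset.prod_eq_zero_iff, Finset.mem_univ, true_and,
      eval_rep_lin_eq_zero_iff (hne _), Set.mem_range, eq_comm (a := p)]
  have hinj : Function.Injective fun j => linRoot (a j) (b j) (hne j) := fun i j hij =>
    by_contra fun hne' => hdist i j hne' ((linRoot_eq_linRoot_iff _ _).mp hij)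
  rw [hrange, Set.ncard_range_of_injective hinj, Nat.card_fin]

end LinearForms

section Rank

variable {f : MvPolynomial (Fin 2) ℝ} {d m n : ℕ}

lemma HasDecomp.succ (h : HasDecomp f d m) : HasDecomp f d (m + 1) := by
  obtain ⟨c, a, b, hne, rfl⟩ := h
  refine ⟨Fin.snoc c 0, Fin.snoc a 1, Fin.snoc b 0, fun j => ?_, by simp [Fin.sum_univ_castSucc]⟩
  induction j using Fin.lastCases with
  | last => simp
  | cast j => simpa using hne j

lemma HasDecomp.mono (hmn : m ≤ n) (h : HasDecomp f d m) : HasDecomp f d n :=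
  Nat.le_induction h (fun _ _ => HasDecomp.succ) n hmn

lemma realRank_eq_succ_iff : realRank f d = m + 1 ↔ HasDecomp f d (m + 1) ∧ ¬ HasDecomp f d m :=
  Nat.sInf_upward_closed_eq_succ_iff (fun _ _ => HasDecomp.mono) m

lemma hasDecomp_one_iff :
    HasDecomp f d 1 ↔ ∃ c a b, (a, b) ≠ (0, 0) ∧ f = C c * lin a b ^ d := by
  constructor
  · rintro ⟨c, a, b, hne, rfl⟩
    exact ⟨c 0, a 0, b 0, hne 0, by simp⟩
  · rintro ⟨c, a, b, hne, rfl⟩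
    exact ⟨fun _ => c, fun _ => a, fun _ => b, fun _ => hne, by simp⟩

lemma hasDecomp_two_iff :
    HasDecomp f d 2 ↔ ∃ c₁ c₂ p q r s, (p, q) ≠ (0, 0) ∧ (r, s) ≠ (0, 0) ∧
      f = C c₁ * lin p q ^ d + C c₂ * lin r s ^ d := by
  constructor
  · rintro ⟨c, a, b, hne, rfl⟩
    exact ⟨c 0, c 1, a 0, b 0, a 1, b 1, hne 0, hne 1, by simp⟩
  · rintro ⟨c₁, c₂, p, q, r, s, hpq, hrs, rfl⟩
    exact ⟨![c₁, c₂], ![p, r], ![q, s], Fin.forall_fin_two.mpr ⟨hpq, hrs⟩, by simp⟩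

lemma hasDecomp_one_of_mul_eq_zero {c₁ c₂ p q r s : ℝ} (hpq : (p, q) ≠ (0, 0))
    (hrs : (r, s) ≠ (0, 0)) (h : c₁ * c₂ * (p * s - q * r) = 0) :
    HasDecomp (C c₁ * lin p q ^ d + C c₂ * lin r s ^ d) d 1 := by
  rw [hasDecomp_one_iff]
  rcases mul_eq_zero.mp h with hc | hdet
  · rcases mul_eq_zero.mp hc with rfl | rfl
    · exact ⟨c₂, r, s, hrs, by simp⟩
    · exact ⟨c₁, p, q, hpq, by simp⟩
  · obtain ⟨k, hk⟩ := exists_lin_eq_C_mul_lin hpq (sub_eq_zero.mp hdet)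
    refine ⟨c₁ + c₂ * k ^ d, p, q, hpq, ?_⟩
    rw [hk, mul_pow, C_add, C_mul, C_pow]
    ring

end Rank

/-- The discriminant `Δ(f)` of the binary cubic `f = a₀x³ + 3a₁x²y + 3a₂xy² + a₃y³`. -/
def cubicDiscr {R : Type*} [CommRing R] (a₀ a₁ a₂ a₃ : R) : R :=
  4 * (a₀ * a₂ - a₁ ^ 2) * (a₁ * a₃ - a₂ ^ 2) - (a₀ * a₃ - a₁ * a₂) ^ 2

lemma discrim_hessian {R : Type*} [CommRing R] (a₀ a₁ a₂ a₃ : R) :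
    discrim (a₀ * a₂ - a₁ ^ 2) (a₀ * a₃ - a₁ * a₂) (a₁ * a₃ - a₂ ^ 2) =
      -cubicDiscr a₀ a₁ a₂ a₃ := by
  unfold discrim cubicDiscr
  ring

/-- The binary quadratic form `Ax² + Bxy + Ey²`. -/
def binaryQuadratic (A B E : ℝ) : MvPolynomial (Fin 2) ℝ :=
  C A * X 0 ^ 2 + C B * X 0 * X 1 + C E * X 1 ^ 2

/-- The binary cubic form `a₀x³ + 3a₁x²y + 3a₂xy² + a₃y³`, with the binomial factors that
`cubicDiscr` expects. -/
def binaryCubic (a₀ a₁ a₂ a₃ : ℝ) : MvPolynomial (Fin 2) ℝ :=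
  C a₀ * X 0 ^ 3 + C (3 * a₁) * X 0 ^ 2 * X 1 + C (3 * a₂) * X 0 * X 1 ^ 2 + C a₃ * X 1 ^ 3

lemma eval_binaryQuadratic (A B E : ℝ) (w : Fin 2 → ℝ) :
    eval w (binaryQuadratic A B E) = A * w 0 ^ 2 + B * w 0 * w 1 + E * w 1 ^ 2 := by
  simp [binaryQuadratic]

lemma eval_binaryCubic (a₀ a₁ a₂ a₃ : ℝ) (w : Fin 2 → ℝ) :
    eval w (binaryCubic a₀ a₁ a₂ a₃) =
      a₀ * w 0 ^ 3 + 3 * a₁ * w 0 ^ 2 * w 1 + 3 * a₂ * w 0 * w 1 ^ 2 + a₃ * w 1 ^ 3 := by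
  simp [binaryCubic]

lemma binaryCubic_inj {a₀ a₁ a₂ a₃ b₀ b₁ b₂ b₃ : ℝ} :
    binaryCubic a₀ a₁ a₂ a₃ = binaryCubic b₀ b₁ b₂ b₃ ↔
      a₀ = b₀ ∧ a₁ = b₁ ∧ a₂ = b₂ ∧ a₃ = b₃ := by
  refine ⟨fun h => ?_, by rintro ⟨rfl, rfl, rfl, rfl⟩; rfl⟩
  have heval (x y : ℝ) := congrArg (eval ![x, y]) h
  simp only [eval_binaryCubic, Matrix.cons_val_zero, Matrix.cons_val_one] at heval
  have h₁₀ := heval 1 0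
  have h₀₁ := heval 0 1
  have h₁₁ := heval 1 1
  have h₁₂ := heval 1 (-1)
  refine ⟨?_, ?_, ?_, ?_⟩ <;> linarith

lemma lin_mul_lin (p q r s : ℝ) :
    lin p q * lin r s = binaryQuadratic (p * r) (p * s + q * r) (q * s) := by
  simp only [lin, binaryQuadratic, C_mul, C_add]
  ring

lemma lin_mul_binaryQuadratic (u v A B E : ℝ) :
    lin u v * binaryQuadratic A B E =
      binaryCubic (u * A) ((u * B + v * A) / 3) ((u * E + v * B) / 3) (v * E) := by
  refine MvPolynomial.funext fun w => ?_
  rw [map_mul, eval_lin, eval_binaryQuadratic, eval_binaryCubic]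
  ring

lemma C_mul_lin_cubed_add (c₁ c₂ p q r s : ℝ) :
    C c₁ * lin p q ^ 3 + C c₂ * lin r s ^ 3 =
      binaryCubic (c₁ * p ^ 3 + c₂ * r ^ 3) (c₁ * p ^ 2 * q + c₂ * r ^ 2 * s)
        (c₁ * p * q ^ 2 + c₂ * r * s ^ 2) (c₁ * q ^ 3 + c₂ * s ^ 3) := by
  refine MvPolynomial.funext fun w => ?_
  simp only [map_add, map_mul, map_pow, eval_C, eval_lin, eval_binaryCubic]
  ring

section CubicRank

variable {a₀ a₁ a₂ a₃ : ℝ}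

lemma cubicDiscr_of_eq_add_cubes {c₁ c₂ p q r s : ℝ}
    (h : binaryCubic a₀ a₁ a₂ a₃ = C c₁ * lin p q ^ 3 + C c₂ * lin r s ^ 3) :
    cubicDiscr a₀ a₁ a₂ a₃ = -(c₁ * c₂ * (p * s - q * r) ^ 3) ^ 2 := by
  obtain ⟨rfl, rfl, rfl, rfl⟩ := binaryCubic_inj.mp (h.trans (C_mul_lin_cubed_add ..))
  unfold cubicDiscr
  ring

lemma hasDecomp_two_of_apolar {p q r s : ℝ} (hdet : p * s - q * r ≠ 0)
    (h₀ : q * s * a₀ - (p * s + q * r) * a₁ + p * r * a₂ = 0)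
    (h₁ : q * s * a₁ - (p * s + q * r) * a₂ + p * r * a₃ = 0) :
    HasDecomp (binaryCubic a₀ a₁ a₂ a₃) 3 2 := by
  have hpq : (p, q) ≠ (0, 0) := by
    rintro ⟨⟩
    simp at hdet
  have hrs : (r, s) ≠ (0, 0) := by
    rintro ⟨⟩
    simp at hdet
  -- The derivation `s ∂x - r ∂y` kills `r x + s y`, so it maps `f` to a multiple of `(p x + q y)²`.
  obtain ⟨k, hk₀, hk₁, hk₂⟩ := exists_eq_mul_sq_of_mul_eq_mul hpq
    (b₀ := s * a₀ - r * a₁) (b₁ := s * a₁ - r * a₂) (b₂ := s * a₂ - r * a₃)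
    (by linear_combination h₀) (by linear_combination h₁)
  obtain ⟨l, hl₀, hl₁, hl₂⟩ := exists_eq_mul_sq_of_mul_eq_mul hrs
    (b₀ := q * a₀ - p * a₁) (b₁ := q * a₁ - p * a₂) (b₂ := q * a₂ - p * a₃)
    (by linear_combination h₀) (by linear_combination h₁)
  refine hasDecomp_two_iff.mpr
    ⟨k / (p * s - q * r), -l / (p * s - q * r), p, q, r, s, hpq, hrs, ?_⟩
  rw [C_mul_lin_cubed_add, binaryCubic_inj]
  refine ⟨?_, ?_, ?_, ?_⟩ <;> field_simp
  · linear_combination p * hk₀ - r * hl₀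
  · linear_combination p * hk₁ - r * hl₁
  · linear_combination p * hk₂ - r * hl₂
  · linear_combination q * hk₂ - s * hl₂

lemma hasDecomp_two_of_cubicDiscr_neg (h : cubicDiscr a₀ a₁ a₂ a₃ < 0) :
    HasDecomp (binaryCubic a₀ a₁ a₂ a₃) 3 2 := by
  have hdiscrim := discrim_hessian a₀ a₁ a₂ a₃
  obtain ⟨p, q, r, s, h₀, h₁, h₂⟩ := exists_factors_of_discrim_eq_mul_self
    (hdiscrim.trans (Real.mul_self_sqrt (neg_pos.mpr h).le).symm)
  have hdet_sq : (p * s - q * r) ^ 2 = -cubicDiscr a₀ a₁ a₂ a₃ := by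
    rw [← hdiscrim, h₀, h₁, h₂, discrim]
    ring
  have hdet : p * s - q * r ≠ 0 := by
    intro hzero
    rw [hzero] at hdet_sq
    linarith
  exact hasDecomp_two_of_apolar hdet
    (by rw [← h₀, ← h₁, ← h₂]; ring) (by rw [← h₀, ← h₁, ← h₂]; ring)

theorem realRank_binaryCubic_eq_two_iff :
    realRank (binaryCubic a₀ a₁ a₂ a₃) 3 = 2 ↔ cubicDiscr a₀ a₁ a₂ a₃ < 0 := by
  rw [realRank_eq_succ_iff]
  constructor
  · rintro ⟨htwo, hone⟩
    obtain ⟨c₁, c₂, p, q, r, s, hpq, hrs, hf⟩ := hasDecomp_two_iff.mp htwo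
    have hne : c₁ * c₂ * (p * s - q * r) ≠ 0 := fun h0 =>
      hone (hf ▸ hasDecomp_one_of_mul_eq_zero hpq hrs h0)
    rw [cubicDiscr_of_eq_add_cubes hf, neg_lt_zero]
    exact sq_pos_of_ne_zero (mul_ne_zero (left_ne_zero_of_mul hne)
      (pow_ne_zero 3 (right_ne_zero_of_mul hne)))
  · refine fun hneg => ⟨hasDecomp_two_of_cubicDiscr_neg hneg, fun hone => hneg.ne ?_⟩
    obtain ⟨c, a, b, -, hf⟩ := hasDecomp_one_iff.mp hone
    have hf' : binaryCubic a₀ a₁ a₂ a₃ = C c * lin a b ^ 3 + C 0 * lin 0 0 ^ 3 := by simpa using hf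
    simpa using cubicDiscr_of_eq_add_cubes hf'

end CubicRank

section CubicRoots

variable {a₀ a₁ a₂ a₃ : ℝ}

lemma exists_isRoot_of_natDegree_eq_three {P : Polynomial ℝ} (hP : P.natDegree = 3) :
    ∃ t, P.IsRoot t := by
  have hred : ¬ Irreducible P := fun hirr => by
    have := hirr.natDegree_le_two
    omega
  rw [Polynomial.irreducible_iff_roots_eq_zero_of_degree_le_three (by omega) (by omega)] at hred
  obtain ⟨t, ht⟩ := Multiset.exists_mem_of_ne_zero hred
  exact ⟨t, Polynomial.isRoot_of_mem_roots ht⟩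

lemma exists_binaryCubic_eq_lin_mul (a₀ a₁ a₂ a₃ : ℝ) :
    ∃ u v A B E, (u, v) ≠ (0, 0) ∧
      binaryCubic a₀ a₁ a₂ a₃ = lin u v * binaryQuadratic A B E := by
  simp only [lin_mul_binaryQuadratic, binaryCubic_inj]
  by_cases ha : a₀ = 0
  · exact ⟨0, 1, 3 * a₁, 3 * a₂, a₃, by simp, by simp [ha], by ring, by ring, by ring⟩
  · let P : Cubic ℝ := ⟨a₀, 3 * a₁, 3 * a₂, a₃⟩
    obtain ⟨t, ht⟩ := exists_isRoot_of_natDegree_eq_three (Cubic.natDegree_of_a_ne_zero (P := P) ha)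
    have hroot : a₀ * t ^ 3 + 3 * a₁ * t ^ 2 + 3 * a₂ * t + a₃ = 0 := by
      simpa [P, Cubic.toPoly] using ht
    refine ⟨1, -t, a₀, 3 * a₁ + a₀ * t, 3 * a₂ + (3 * a₁ + a₀ * t) * t, by simp, by ring, by ring,
      by ring, ?_⟩
    linear_combination hroot

lemma cubicDiscr_of_eq_lin_mul {u v A B E : ℝ}
    (h : binaryCubic a₀ a₁ a₂ a₃ = lin u v * binaryQuadratic A B E) :
    cubicDiscr a₀ a₁ a₂ a₃ =
      discrim A B E * (A * v ^ 2 + B * v * -u + E * (-u) ^ 2) ^ 2 / 27 := by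
  obtain ⟨rfl, rfl, rfl, rfl⟩ := binaryCubic_inj.mp (h.trans (lin_mul_binaryQuadratic ..))
  unfold cubicDiscr discrim
  ring

lemma cubicDiscr_neg_iff_discrim_neg {u v A B E : ℝ} (huv : (u, v) ≠ (0, 0))
    (h : binaryCubic a₀ a₁ a₂ a₃ = lin u v * binaryQuadratic A B E) :
    cubicDiscr a₀ a₁ a₂ a₃ < 0 ↔ discrim A B E < 0 := by
  rw [cubicDiscr_of_eq_lin_mul h]
  refine ⟨fun hneg => ?_, fun hneg => ?_⟩
  · by_contra! hnonneg
    exact hneg.not_ge (by positivity)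
  · have hvu : (v, -u) ≠ (0, 0) := by simpa [and_comm] using huv
    have hvalue := quadraticForm_ne_zero_of_discrim_neg hneg hvu
    exact div_neg_of_neg_of_pos (mul_neg_of_neg_of_pos hneg (by positivity)) (by norm_num)

theorem ncard_projRoots_of_cubicDiscr_neg (h : cubicDiscr a₀ a₁ a₂ a₃ < 0) :
    (projRoots (binaryCubic a₀ a₁ a₂ a₃)).ncard = 1 := by
  obtain ⟨u, v, A, B, E, huv, hf⟩ := exists_binaryCubic_eq_lin_mul a₀ a₁ a₂ a₃
  have hdiscrim : discrim A B E < 0 := (cubicDiscr_neg_iff_discrim_neg huv hf).mp h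
  refine Set.ncard_eq_one.mpr ⟨linRoot u v huv, Set.ext fun p => ?_⟩
  have hrep : (p.rep 0, p.rep 1) ≠ (0, 0) := by
    intro hp
    obtain ⟨hp₀, hp₁⟩ := Prod.mk_eq_zero.mp hp
    exact p.rep_nonzero (_root_.funext (Fin.forall_fin_two.mpr ⟨hp₀, hp₁⟩))
  have hquad : eval p.rep (binaryQuadratic A B E) ≠ 0 := by
    rw [eval_binaryQuadratic]
    exact quadraticForm_ne_zero_of_discrim_neg hdiscrim hrep
  rw [mem_projRoots, hf, map_mul, mul_eq_zero, or_iff_left hquad,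
    eval_rep_lin_eq_zero_iff huv, Set.mem_singleton_iff]

lemma exists_binaryCubic_eq_prod_lin (h : 0 ≤ cubicDiscr a₀ a₁ a₂ a₃) :
    ∃ a b : Fin 3 → ℝ, binaryCubic a₀ a₁ a₂ a₃ = ∏ j, lin (a j) (b j) := by
  obtain ⟨u, v, A, B, E, huv, hf⟩ := exists_binaryCubic_eq_lin_mul a₀ a₁ a₂ a₃
  have hdiscrim : 0 ≤ discrim A B E :=
    not_lt.mp (mt (cubicDiscr_neg_iff_discrim_neg huv hf).mpr h.not_gt)
  obtain ⟨p, q, r, s, rfl, rfl, rfl⟩ :=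
    exists_factors_of_discrim_eq_mul_self (Real.mul_self_sqrt hdiscrim).symm
  refine ⟨![u, p, r], ![v, q, s], ?_⟩
  simp [hf, ← lin_mul_lin, Fin.prod_univ_three, mul_assoc]

theorem splitsDistinct_binaryCubic_of_cubicDiscr_nonneg
    (hsf : SquarefreeC (binaryCubic a₀ a₁ a₂ a₃)) (h : 0 ≤ cubicDiscr a₀ a₁ a₂ a₃) :
    SplitsDistinct (binaryCubic a₀ a₁ a₂ a₃) 3 := by
  obtain ⟨a, b, hf⟩ := exists_binaryCubic_eq_prod_lin h
  exact splitsDistinct_of_squarefreeC hsf hf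

theorem ncard_projRoots_binaryCubic_eq_one_iff (hsf : SquarefreeC (binaryCubic a₀ a₁ a₂ a₃)) :
    (projRoots (binaryCubic a₀ a₁ a₂ a₃)).ncard = 1 ↔ cubicDiscr a₀ a₁ a₂ a₃ < 0 := by
  refine ⟨fun hone => ?_, ncard_projRoots_of_cubicDiscr_neg⟩
  by_contra! hnonneg
  have hthree := ncard_projRoots_of_splitsDistinct
    (splitsDistinct_binaryCubic_of_cubicDiscr_nonneg hsf hnonneg)
  omega

end CubicRoots

/-- for a real binary cubic with distinct (complex) roots:
real rank 2 ↔ Δ(f) < 0 ↔ exactly one real root. -/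
theorem stmt1 (a₀ a₁ a₂ a₃ : ℝ) (f : MvPolynomial (Fin 2) ℝ)
    (hf : f = C a₀ * X 0 ^ 3 + C (3 * a₁) * X 0 ^ 2 * X 1 +
      C (3 * a₂) * X 0 * X 1 ^ 2 + C a₃ * X 1 ^ 3)
    (hsf : SquarefreeC f) :
    (realRank f 3 = 2 ↔
      4 * (a₀ * a₂ - a₁ ^ 2) * (a₁ * a₃ - a₂ ^ 2) - (a₀ * a₃ - a₁ * a₂) ^ 2 < 0) ∧
    (realRank f 3 = 2 ↔ (projRoots f).ncard = 1) := by
  obtain rfl : f = binaryCubic a₀ a₁ a₂ a₃ := hf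
  exact ⟨realRank_binaryCubic_eq_two_iff,
    realRank_binaryCubic_eq_two_iff.trans (ncard_projRoots_binaryCubic_eq_one_iff hsf).symm⟩
end
end

section
/- Canonical forms for real binary quartics: let f be a real binary quartic with distinct roots (squarefree over ℂ). (1) If f has no real root, there exist A ∈ GL₂(ℝ), λ ∈ ℝ \ {0} and a > 0 such that λ·f(A(x,y)) = (x²+y²)(x²+ay²). (2) If f has exactly two distinct real roots, there exist A ∈ GL₂(ℝ), λ ≠ 0 and a < 0 such that λ·f(A(x,y)) = (x²+y²)(x²+ay²). (3) If f has four distinct real roots, there exist A ∈ GL₂(ℝ), λ ≠ 0 and a < 0 such that λ·f(A(x,y)) = (x²−y²)(x²+ay²). -/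
open MvPolynomial

noncomputable section

/-
A squarefree real quartic is a product of two real quadratic forms, and the factors can be chosen
with positive resultant: a definite quadratic factor forces this, while for four real linear factors
the Plücker relation between the brackets `[ij]` makes the resultant positive for at least one of
the three pairings. Positivity of the resultant gives the Jacobian of the two quadratic factors two
distinct real roots, and in the coordinates where these are `[1:0]` and `[0:1]` both factors are
diagonal. Scaling then leads to `(x² ± y²)(x² + ay²)`, and the signs of the coefficients determine
the number of real roots.
-/

section Subst

variable {f : MvPolynomial (Fin 2) ℝ} {A : Matrix (Fin 2) (Fin 2) ℝ}

lemma eval_subst (A : Matrix (Fin 2) (Fin 2) ℝ) (f : MvPolynomial (Fin 2) ℝ) (v : Fin 2 → ℝ) :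
    eval v (subst A f) = eval (A.mulVec v) f := by
  have hcomp : (eval v).comp (aeval fun i ↦ C (A i 0) * X 0 + C (A i 1) * X 1).toRingHom =
      eval (A.mulVec v) := by
    ext i
    · simp
    · fin_cases i <;> simp
  exact DFunLike.congr_fun hcomp f

lemma subst_mul (A : Matrix (Fin 2) (Fin 2) ℝ) (f g : MvPolynomial (Fin 2) ℝ) :
    subst A (f * g) = subst A f * subst A g :=
  map_mul _ f g

lemma subst_subst (A B : Matrix (Fin 2) (Fin 2) ℝ) (f : MvPolynomial (Fin 2) ℝ) :
    subst A (subst B f) = subst (B * A) f :=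
  MvPolynomial.funext fun v ↦ by simp only [eval_subst, Matrix.mulVec_mulVec]

lemma subst_one (f : MvPolynomial (Fin 2) ℝ) : subst 1 f = f :=
  MvPolynomial.funext fun v ↦ by rw [eval_subst, Matrix.one_mulVec]

lemma isHomogeneous_subst {n : ℕ} (hf : f.IsHomogeneous n) (A : Matrix (Fin 2) (Fin 2) ℝ) :
    (subst A f).IsHomogeneous n := by
  rw [← one_mul n]
  exact hf.aeval _ fun i ↦ (isHomogeneous_C_mul_X _ 0).add (isHomogeneous_C_mul_X _ 1)

lemma squarefree_subst (hf : Squarefree f) (hA : IsUnit A.det) : Squarefree (subst A f) := by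
  rintro g ⟨k, hk⟩
  have hdvd : subst A⁻¹ g * subst A⁻¹ g ∣ f := by
    refine ⟨subst A⁻¹ k, ?_⟩
    rw [← subst_mul, ← subst_mul, ← hk, subst_subst, Matrix.mul_nonsing_inv A hA, subst_one]
  have hunit : IsUnit (subst A (subst A⁻¹ g)) := (hf _ hdvd).map (aeval _)
  rwa [subst_subst, Matrix.nonsing_inv_mul A hA, subst_one] at hunit

end Subst

section ProjRoots

variable {f : MvPolynomial (Fin 2) ℝ} {n : ℕ}

lemma eval_smul_of_isHomogeneous {σ R : Type*} [CommSemiring R] {f : MvPolynomial σ R}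
    (hf : f.IsHomogeneous n) (t : R) (v : σ → R) :
    eval (t • v) f = t ^ n * eval v f := by
  rw [eval_eq, eval_eq, Finset.mul_sum]
  refine Finset.sum_congr rfl fun d hd ↦ ?_
  rw [hf.degree_eq_sum_deg_support hd, ← Finset.prod_pow_eq_pow_sum]
  simp only [Pi.smul_apply, smul_eq_mul, mul_pow, Finset.prod_mul_distrib]
  ring

lemma mk_mem_projRoots (hf : f.IsHomogeneous n) (v : Fin 2 → ℝ) (hv : v ≠ 0) :
    Projectivization.mk ℝ v hv ∈ projRoots f ↔ eval v f = 0 := by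
  obtain ⟨k, hk⟩ := Projectivization.exists_smul_eq_mk_rep ℝ v hv
  rw [projRoots, Set.mem_ofPred_eq, ← hk, Units.smul_def, eval_smul_of_isHomogeneous hf]
  simp

lemma ncard_projRoots_subst {A : Matrix (Fin 2) (Fin 2) ℝ} (hf : f.IsHomogeneous n)
    (hA : IsUnit A.det) : (projRoots (subst A f)).ncard = (projRoots f).ncard := by
  let g : GL (Fin 2) ℝ := Matrix.GeneralLinearGroup.mk'' A hA
  rw [← Set.ncard_smul_set g⁻¹ (projRoots f)]
  congr 1
  ext p
  rw [Set.mem_smul_set_iff_inv_smul_mem, inv_inv]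
  induction p using Projectivization.ind with
  | h v hv =>
    rw [Projectivization.smul_mk, mk_mem_projRoots (isHomogeneous_subst hf A),
      mk_mem_projRoots hf, eval_subst]
    rfl

lemma ncard_projRoots_eq_ncard_affine (hf : f.IsHomogeneous n) (h : eval ![1, 0] f ≠ 0) :
    (projRoots f).ncard = {t : ℝ | eval ![t, 1] f = 0}.ncard := by
  have hpre : OnePoint.equivProjectivization ℝ ⁻¹' projRoots f =
      (↑) '' {t : ℝ | eval ![t, 1] f = 0} := by
    ext x
    induction x using OnePoint.rec with
    | infty => simp [mk_mem_projRoots hf, h]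
    | coe t => simp [mk_mem_projRoots hf]
  rw [← Set.ncard_image_of_injective {t : ℝ | _} OnePoint.coe_injective, ← hpre,
    Set.ncard_preimage_of_injective_subset_range (Equiv.injective _) (by simp)]

end ProjRoots

section Equivalence

/-- `f` and `g` are equivalent up to a real linear change of variables and a nonzero real factor,
the relation under which binary forms are put into canonical form. -/
def FormEquiv (f g : MvPolynomial (Fin 2) ℝ) : Prop :=
  ∃ (A : Matrix (Fin 2) (Fin 2) ℝ) (lam : ℝ), IsUnit A.det ∧ lam ≠ 0 ∧ C lam * subst A f = g

namespace FormEquiv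

variable {f g h : MvPolynomial (Fin 2) ℝ}

lemma of_subst {A : Matrix (Fin 2) (Fin 2) ℝ} (hA : IsUnit A.det) (hfg : subst A f = g) :
    FormEquiv f g :=
  ⟨A, 1, hA, one_ne_zero, by rw [C_1, one_mul, hfg]⟩

lemma trans (hfg : FormEquiv f g) (hgh : FormEquiv g h) : FormEquiv f h := by
  obtain ⟨A, lam, hA, hlam, rfl⟩ := hfg
  obtain ⟨B, mu, hB, hmu, rfl⟩ := hgh
  refine ⟨A * B, mu * lam, ?_, mul_ne_zero hmu hlam, ?_⟩
  · rw [Matrix.det_mul]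
    exact hA.mul hB
  · rw [subst_mul, subst_subst, C_mul, mul_assoc]
    simp [subst]

lemma squarefree (hfg : FormEquiv f g) (hf : Squarefree f) : Squarefree g := by
  obtain ⟨A, lam, hA, hlam, rfl⟩ := hfg
  have hC : IsUnit (C lam : MvPolynomial (Fin 2) ℝ) := hlam.isUnit.map C
  exact (associated_unit_mul_left _ _ hC).squarefree_iff.2 (squarefree_subst hf hA)

lemma ncard_projRoots {n : ℕ} (hfg : FormEquiv f g) (hf : f.IsHomogeneous n) :
    (projRoots f).ncard = (projRoots g).ncard := by
  obtain ⟨A, lam, hA, hlam, rfl⟩ := hfg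
  rw [← ncard_projRoots_subst hf hA]
  simp [projRoots, hlam]

end FormEquiv

end Equivalence

section Squarefree

lemma SquarefreeC.squarefree {f : MvPolynomial (Fin 2) ℝ} (hf : SquarefreeC f) :
    Squarefree f := by
  rintro g ⟨h, rfl⟩
  have hunit : IsUnit (map (algebraMap ℝ ℂ) g) :=
    hf _ ⟨map (algebraMap ℝ ℂ) h, by rw [map_mul, map_mul]⟩
  simpa only [isUnit_iff_totalDegree_of_isReduced, totalDegree, coeff_map, isUnit_iff_ne_zero,
    support_map_of_injective _ (algebraMap ℝ ℂ).injective, map_ne_zero] using hunit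

lemma eval_zero_ne_zero_of_mul_self_dvd {σ R : Type*} [CommRing R] [Nontrivial R]
    {f g : MvPolynomial σ R} (hf : Squarefree f) (h : g * g ∣ f) : eval 0 g ≠ 0 :=
  ((hf g h).map (eval 0)).ne_zero

lemma mul_ne_mul_of_squarefree_lin_mul_lin {a b c d : ℝ}
    (h : Squarefree (lin a b * lin c d)) : a * d ≠ c * b := by
  intro hdet
  have hsq : a ^ 2 + b ^ 2 ≠ 0 := by
    intro h0
    obtain ⟨rfl, rfl⟩ : a = 0 ∧ b = 0 := by constructor <;> nlinarith
    exact h.ne_zero (by simp [lin])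
  obtain ⟨k, rfl, rfl⟩ : ∃ k, c = a * k ∧ d = b * k := by
    refine ⟨(a * c + b * d) / (a ^ 2 + b ^ 2), ?_, ?_⟩
    · field_simp
      linear_combination -b * hdet
    · field_simp
      linear_combination a * hdet
  refine eval_zero_ne_zero_of_mul_self_dvd h (mul_dvd_mul_left (lin a b) ⟨C k, ?_⟩) (by simp [lin])
  simp only [lin, C_mul]
  ring

lemma splitsDistinct_of_squarefree {d : ℕ} {a b : Fin d → ℝ}
    (h : Squarefree (∏ j, lin (a j) (b j))) : SplitsDistinct (∏ j, lin (a j) (b j)) d := by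
  refine ⟨a, b, fun j hj ↦ ?_, fun i j hij ↦ ?_, rfl⟩
  · refine Finset.prod_ne_zero_iff.1 h.ne_zero j (Finset.mem_univ j) ?_
    simp_all [lin]
  · have hdvd : lin (a i) (b i) * lin (a j) (b j) ∣ ∏ j, lin (a j) (b j) := by
      rw [← Finset.prod_pair hij (f := fun j ↦ lin (a j) (b j))]
      exact Finset.prod_dvd_prod_of_subset _ _ _ (Finset.subset_univ _)
    exact mul_ne_mul_of_squarefree_lin_mul_lin (h.squarefree_of_dvd hdvd)

end Squarefree

section Factorization

open Polynomial in
lemma exists_eq_mul_natDegree_le_two (n : ℕ) (p : ℝ[X]) (hp : p.natDegree ≤ n + 2) :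
    ∃ q r : ℝ[X], p = q * r ∧ q.natDegree ≤ 2 ∧ r.natDegree ≤ n := by
  induction n generalizing p with
  | zero => exact ⟨p, 1, (mul_one p).symm, hp, natDegree_one.le⟩
  | succ n ih =>
    rcases le_or_gt p.natDegree 2 with hp2 | hp2
    · exact ⟨p, 1, (mul_one p).symm, hp2, by simp⟩
    have hp0 : p ≠ 0 := by
      rintro rfl
      simp at hp2
    obtain ⟨i, hi, s, rfl⟩ := WfDvdMonoid.exists_irreducible_factor
      (fun hunit ↦ by simp [natDegree_eq_zero_of_isUnit hunit] at hp2) hp0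
    have hdeg : (i * s).natDegree = i.natDegree + s.natDegree :=
      natDegree_mul hi.ne_zero (right_ne_zero_of_mul hp0)
    have hi2 := hi.natDegree_le_two
    have hi1 := hi.natDegree_pos
    rcases hi2.eq_or_lt with h2 | h1
    · exact ⟨i, s, rfl, hi2, by omega⟩
    · obtain ⟨q, r, rfl, hq, hr⟩ := ih s (by omega)
      exact ⟨q, i * r, mul_left_comm i q r, hq, natDegree_mul_le.trans (by omega)⟩

/-- The binary quadratic form `a·x² + b·xy + c·y²`. -/
def quad (a b c : ℝ) : MvPolynomial (Fin 2) ℝ :=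
  C a * X 0 ^ 2 + C b * (X 0 * X 1) + C c * X 1 ^ 2

lemma isHomogeneous_quad (a b c : ℝ) : (quad a b c).IsHomogeneous 2 :=
  (((isHomogeneous_X_pow 0 2).C_mul a).add
    (((isHomogeneous_X ℝ 0).mul (isHomogeneous_X ℝ 1)).C_mul b)).add
    ((isHomogeneous_X_pow 1 2).C_mul c)

lemma homogenize_two {p : Polynomial ℝ} (hp : p.natDegree ≤ 2) :
    p.homogenize 2 = quad (p.coeff 2) (p.coeff 1) (p.coeff 0) := by
  conv_lhs => rw [p.as_sum_range_C_mul_X_pow' (Nat.lt_succ_of_le hp)]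
  simp only [quad, Finset.sum_range_succ, Finset.sum_range_zero, zero_add, pow_zero, mul_one,
    pow_one, Polynomial.homogenize_add, Polynomial.homogenize_C, Polynomial.homogenize_C_mul,
    Polynomial.homogenize_X two_ne_zero, Polynomial.homogenize_X_pow le_rfl]
  ring

lemma exists_eq_quad_mul_quad {f : MvPolynomial (Fin 2) ℝ} (hf : f.IsHomogeneous 4) :
    ∃ a b c a' b' c' : ℝ, f = quad a b c * quad a' b' c' := by
  set p : Polynomial ℝ := aeval ![Polynomial.X, 1] f with hp
  have hdeg : p.natDegree ≤ 4 * 1 := by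
    refine aeval_natDegree_le f hf.totalDegree_le _ fun i ↦ ?_
    fin_cases i <;> simp
  obtain ⟨q, r, hqr, hq, hr⟩ := exists_eq_mul_natDegree_le_two 2 p hdeg
  refine ⟨q.coeff 2, q.coeff 1, q.coeff 0, r.coeff 2, r.coeff 1, r.coeff 0, ?_⟩
  rw [← homogenize_two hq, ← homogenize_two hr, ← Polynomial.homogenize_mul q r hq hr, ← hqr,
    Polynomial.homogenize_eq_of_isHomogeneous hf hp.symm]

lemma lin_mul_lin_s6 (a b c d : ℝ) :
    lin a b * lin c d = quad (a * c) (a * d + b * c) (b * d) := by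
  simp only [lin, quad, C_add, C_mul]
  ring

lemma exists_linear_factors_of_discrim_nonneg {a b c : ℝ} (h : 0 ≤ discrim a b c) :
    ∃ u v u' v' : ℝ, u * u' = a ∧ u * v' + v * u' = b ∧ v * v' = c := by
  by_cases ha : a = 0
  · exact ⟨0, 1, b, c, by simp [ha]⟩
  · set w := √(discrim a b c)
    have hw : w ^ 2 = b ^ 2 - 4 * a * c := Real.sq_sqrt h
    refine ⟨a, (b - w) / 2, 1, (b + w) / (2 * a), mul_one a, ?_, ?_⟩
    · field
    · field_simp
      linear_combination -hw

end Factorization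

section Resultant

/-- The resultant of the binary quadratic forms `quad a b c` and `quad a' b' c'`. -/
def quadResultant (a b c a' b' c' : ℝ) : ℝ :=
  (a * c' - a' * c) ^ 2 - (a * b' - a' * b) * (b * c' - b' * c)

lemma quadResultant_comm (a b c a' b' c' : ℝ) :
    quadResultant a b c a' b' c' = quadResultant a' b' c' a b c := by
  simp only [quadResultant]
  ring

lemma quadResultant_pos_of_discrim_neg {a b c a' b' c' : ℝ} (h : discrim a b c < 0)
    (hsf : Squarefree (quad a b c * quad a' b' c')) : 0 < quadResultant a b c a' b' c' := by
  have ha : a ≠ 0 := by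
    rintro rfl
    simp only [discrim] at h
    nlinarith
  have hid : 4 * a ^ 2 * quadResultant a b c a' b' c' =
      (2 * a * (a * c' - a' * c) - b * (a * b' - a' * b)) ^ 2 +
        -discrim a b c * (a * b' - a' * b) ^ 2 := by
    simp only [quadResultant, discrim]
    ring
  suffices hpos : 0 < 4 * a ^ 2 * quadResultant a b c a' b' c' from
    pos_of_mul_pos_right hpos (by positivity)
  rw [hid]
  have hneg : 0 < -discrim a b c := neg_pos.2 h
  by_cases hb : a * b' - a' * b = 0
  · have hc : a * c' - a' * c ≠ 0 := by
      intro hc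
      obtain ⟨k, rfl, rfl, rfl⟩ : ∃ k, a' = a * k ∧ b' = b * k ∧ c' = c * k := by
        refine ⟨a' / a, by field, ?_, ?_⟩
        · field_simp
          linear_combination hb
        · field_simp
          linear_combination hc
      refine eval_zero_ne_zero_of_mul_self_dvd hsf (mul_dvd_mul_left (quad a b c) ⟨C k, ?_⟩)
        (by simp [quad])
      simp only [quad, C_mul]
      ring
    rw [hb, mul_zero, sub_zero]
    positivity
  · positivity

lemma exists_quadResultant_pos_of_splitsDistinct {f : MvPolynomial (Fin 2) ℝ}
    (hf : SplitsDistinct f 4) :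
    ∃ a b c a' b' c' : ℝ, f = quad a b c * quad a' b' c' ∧ 0 < quadResultant a b c a' b' c' := by
  obtain ⟨a, b, -, hdet, rfl⟩ := hf
  let bracket (i j : Fin 4) : ℝ := a i * b j - a j * b i
  have hbracket {i j : Fin 4} (hij : i ≠ j) : bracket i j ≠ 0 := sub_ne_zero.2 (hdet i j hij)
  have hpair (i j k l : Fin 4)
      (hprod : ∏ m, lin (a m) (b m) = lin (a i) (b i) * lin (a j) (b j) *
        (lin (a k) (b k) * lin (a l) (b l)))
      (hpos : 0 < bracket i k * bracket j l * (bracket i l * bracket j k)) :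
      ∃ p q r p' q' r' : ℝ, ∏ m, lin (a m) (b m) = quad p q r * quad p' q' r' ∧
        0 < quadResultant p q r p' q' r' := by
    refine ⟨_, _, _, _, _, _, by rw [hprod, lin_mul_lin_s6, lin_mul_lin_s6], ?_⟩
    convert hpos using 1
    simp only [quadResultant, bracket]
    ring
  have hplucker : bracket 0 2 * bracket 1 3 =
      bracket 0 1 * bracket 2 3 + bracket 0 3 * bracket 1 2 := by
    simp only [bracket]
    ring
  rcases lt_or_ge (bracket 0 1 * bracket 2 3 * (bracket 0 3 * bracket 1 2)) 0 with hneg | hnonneg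
  · refine hpair 0 2 1 3 (by rw [Fin.prod_univ_four]; ring) ?_
    have hswap : bracket 2 1 = -bracket 1 2 := (neg_sub _ _).symm
    rw [hswap]
    linarith
  · refine hpair 0 1 2 3 (by rw [Fin.prod_univ_four]; ring) ?_
    have hne : bracket 0 3 * bracket 1 2 ≠ 0 :=
      mul_ne_zero (hbracket (by decide)) (hbracket (by decide))
    rw [hplucker, add_mul]
    exact add_pos_of_nonneg_of_pos hnonneg (mul_self_pos.2 hne)

lemma exists_eq_quad_mul_quad_quadResultant_pos {f : MvPolynomial (Fin 2) ℝ}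
    (hf : f.IsHomogeneous 4) (hsf : Squarefree f) :
    ∃ a b c a' b' c' : ℝ, f = quad a b c * quad a' b' c' ∧ 0 < quadResultant a b c a' b' c' := by
  obtain ⟨a, b, c, a', b', c', rfl⟩ := exists_eq_quad_mul_quad hf
  rcases lt_or_ge (discrim a b c) 0 with h | h
  · exact ⟨a, b, c, a', b', c', rfl, quadResultant_pos_of_discrim_neg h hsf⟩
  rcases lt_or_ge (discrim a' b' c') 0 with h' | h'
  · refine ⟨a, b, c, a', b', c', rfl, ?_⟩
    rw [mul_comm] at hsf
    rw [quadResultant_comm]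
    exact quadResultant_pos_of_discrim_neg h' hsf
  obtain ⟨u₀, v₀, u₁, v₁, rfl, rfl, rfl⟩ := exists_linear_factors_of_discrim_nonneg h
  obtain ⟨u₂, v₂, u₃, v₃, rfl, rfl, rfl⟩ := exists_linear_factors_of_discrim_nonneg h'
  have hprod : quad (u₀ * u₁) (u₀ * v₁ + v₀ * u₁) (v₀ * v₁) *
      quad (u₂ * u₃) (u₂ * v₃ + v₂ * u₃) (v₂ * v₃) =
        ∏ j, lin (![u₀, u₁, u₂, u₃] j) (![v₀, v₁, v₂, v₃] j) := by
    simp only [← lin_mul_lin_s6, Fin.prod_univ_four]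
    exact (mul_assoc _ _ _).symm
  rw [hprod] at hsf ⊢
  exact exists_quadResultant_pos_of_splitsDistinct (splitsDistinct_of_squarefree hsf)

end Resultant

section Diagonalization

lemma subst_quad (p q r s a b c : ℝ) :
    subst !![p, q; r, s] (quad a b c) =
      quad (a * p ^ 2 + b * (p * r) + c * r ^ 2)
        (2 * a * (p * q) + b * (p * s + q * r) + 2 * c * (r * s))
        (a * q ^ 2 + b * (q * s) + c * s ^ 2) := by
  simp only [subst, quad, map_add, map_mul, map_pow, map_ofNat, aeval_X, aeval_C, algebraMap_eq,
    Matrix.of_apply, Matrix.cons_val_zero, Matrix.cons_val_one]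
  ring

-- The columns of `A` are the roots of the Jacobian of the two forms, whose discriminant is four
-- times their resultant; these roots are conjugate with respect to both forms.
lemma exists_subst_quad_eq_diag {a b c a' b' c' : ℝ} (h : 0 < quadResultant a b c a' b' c') :
    ∃ (A : Matrix (Fin 2) (Fin 2) ℝ) (α β γ δ : ℝ), IsUnit A.det ∧
      subst A (quad a b c) = quad α 0 β ∧ subst A (quad a' b' c') = quad γ 0 δ := by
  have hdisc : discrim (a * b' - a' * b) (2 * (a * c' - a' * c)) (b * c' - b' * c) =
      4 * quadResultant a b c a' b' c' := by
    simp only [discrim, quadResultant]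
    ring
  obtain ⟨u, v, u', v', huu, huv, hvv⟩ :=
    exists_linear_factors_of_discrim_nonneg (hdisc.symm ▸ by positivity :
      0 ≤ discrim (a * b' - a' * b) (2 * (a * c' - a' * c)) (b * c' - b' * c))
  refine ⟨!![v, v'; -u, -u'], _, _, _, _, ?_,
    (subst_quad _ _ _ _ _ _ _).trans (congrArg (quad _ · _) ?_),
    (subst_quad _ _ _ _ _ _ _).trans (congrArg (quad _ · _) ?_)⟩
  · have hdet : (u * v' - v * u') ^ 2 = 4 * quadResultant a b c a' b' c' := by
      rw [← hdisc, ← huu, ← huv, ← hvv, discrim]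
      ring
    rw [isUnit_iff_ne_zero, Matrix.det_fin_two_of]
    nlinarith
  · linear_combination 2 * a * hvv - b * huv + 2 * c * huu
  · linear_combination 2 * a' * hvv - b' * huv + 2 * c' * huu

lemma ne_zero_of_squarefree_quad_diag_mul {α β : ℝ} {g : MvPolynomial (Fin 2) ℝ}
    (h : Squarefree (quad α 0 β * g)) : α ≠ 0 ∧ β ≠ 0 := by
  have hdvd (i : Fin 2) : ¬ X i * X i ∣ quad α 0 β := fun hi ↦
    eval_zero_ne_zero_of_mul_self_dvd h (hi.mul_right g) (by simp)
  constructor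
  · rintro rfl
    exact hdvd 1 ⟨C β, by simp only [quad, C_0]; ring⟩
  · rintro rfl
    exact hdvd 0 ⟨C α, by simp only [quad, C_0]; ring⟩

lemma exists_formEquiv_quad_diag_mul {f : MvPolynomial (Fin 2) ℝ} (hf : f.IsHomogeneous 4)
    (hsf : Squarefree f) :
    ∃ α β γ δ : ℝ, FormEquiv f (quad α 0 β * quad γ 0 δ) ∧ α * β ≠ 0 ∧ γ * δ ≠ 0 := by
  obtain ⟨a, b, c, a', b', c', rfl, hres⟩ := exists_eq_quad_mul_quad_quadResultant_pos hf hsf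
  obtain ⟨A, α, β, γ, δ, hA, hαβ, hγδ⟩ := exists_subst_quad_eq_diag hres
  have hequiv := FormEquiv.of_subst hA (subst_mul A (quad a b c) (quad a' b' c'))
  rw [hαβ, hγδ] at hequiv
  have hsf' := hequiv.squarefree hsf
  obtain ⟨hα, hβ⟩ := ne_zero_of_squarefree_quad_diag_mul hsf'
  rw [mul_comm] at hsf'
  obtain ⟨hγ, hδ⟩ := ne_zero_of_squarefree_quad_diag_mul hsf'
  exact ⟨α, β, γ, δ, hequiv, mul_ne_zero hα hβ, mul_ne_zero hγ hδ⟩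

end Diagonalization

section CanonicalForm

lemma C_mul_quad_mul_quad (s t a b c a' b' c' : ℝ) :
    C (s * t) * (quad a b c * quad a' b' c') =
      quad (s * a) (s * b) (s * c) * quad (t * a') (t * b') (t * c') := by
  simp only [quad, C_mul]
  ring

lemma exists_formEquiv_quad_one_mul {α β γ δ ε : ℝ} (hαβ : 0 < ε * (α * β)) (hγδ : γ * δ ≠ 0) :
    ∃ a : ℝ, 0 < γ * δ * a ∧
      FormEquiv (quad α 0 β * quad γ 0 δ) (quad 1 0 ε * quad 1 0 a) := by
  obtain ⟨-, hα, hβ⟩ : ε ≠ 0 ∧ α ≠ 0 ∧ β ≠ 0 := by simpa using hαβ.ne'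
  obtain ⟨hγ, hδ⟩ := mul_ne_zero_iff.1 hγδ
  have hpos : 0 < ε * α / β := by
    rw [show ε * α / β = ε * (α * β) / β ^ 2 by field]
    positivity
  set s := √(ε * α / β)
  have hs : s ^ 2 = ε * α / β := Real.sq_sqrt hpos.le
  have hs0 : s ≠ 0 := (Real.sqrt_pos.2 hpos).ne'
  refine ⟨δ * s ^ 2 / γ, ?_, !![1, 0; 0, s], α⁻¹ * γ⁻¹, ?_, by positivity, ?_⟩
  · rw [show γ * δ * (δ * s ^ 2 / γ) = (δ * s) ^ 2 by field]
    positivity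
  · simpa using hs0
  · rw [subst_mul, subst_quad, subst_quad, C_mul_quad_mul_quad]
    congr 2
    · field
    · ring
    · rw [hs]
      field
    · field
    · ring
    · field

theorem formEquiv_canonical {f : MvPolynomial (Fin 2) ℝ} (hf : f.IsHomogeneous 4)
    (hsf : Squarefree f) :
    (∃ a, 0 < a ∧ FormEquiv f (quad 1 0 1 * quad 1 0 a)) ∨
      (∃ a, a < 0 ∧ FormEquiv f (quad 1 0 1 * quad 1 0 a)) ∨
      ∃ a, a < 0 ∧ FormEquiv f (quad 1 0 (-1) * quad 1 0 a) := by
  obtain ⟨α, β, γ, δ, hdiag, hαβ, hγδ⟩ := exists_formEquiv_quad_diag_mul hf hsf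
  rcases hαβ.lt_or_gt with hαβ_neg | hαβ_pos
  · rcases hγδ.lt_or_gt with hγδ_neg | hγδ_pos
    · have hε : 0 < -1 * (α * β) := by linarith
      obtain ⟨a, ha, hequiv⟩ := exists_formEquiv_quad_one_mul hε hγδ
      exact .inr (.inr ⟨a, by nlinarith, hdiag.trans hequiv⟩)
    · have hε : 0 < 1 * (γ * δ) := by linarith
      obtain ⟨a, ha, hequiv⟩ := exists_formEquiv_quad_one_mul hε hαβ
      rw [mul_comm] at hdiag
      exact .inr (.inl ⟨a, by nlinarith, hdiag.trans hequiv⟩)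
  · have hε : 0 < 1 * (α * β) := by linarith
    obtain ⟨a, ha, hequiv⟩ := exists_formEquiv_quad_one_mul hε hγδ
    rcases hγδ.lt_or_gt with hγδ_neg | hγδ_pos
    · exact .inr (.inl ⟨a, by nlinarith, hdiag.trans hequiv⟩)
    · exact .inl ⟨a, pos_of_mul_pos_right ha hγδ_pos.le, hdiag.trans hequiv⟩

end CanonicalForm

section RootCount

variable {a b : ℝ}

lemma setOf_sq_eq_eq_empty (ha : a < 0) : {t : ℝ | t ^ 2 = a} = ∅ :=
  Set.eq_empty_of_forall_notMem fun t ht ↦ (sq_nonneg t).not_gt (ht.trans_lt ha)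

lemma ncard_setOf_sq_eq (ha : 0 < a) : {t : ℝ | t ^ 2 = a}.ncard = 2 := by
  have hset : {t : ℝ | t ^ 2 = a} = {√a, -√a} := by
    ext t
    rw [Set.mem_ofPred_eq, Set.mem_insert_iff, Set.mem_singleton_iff,
      ← sq_eq_sq_iff_eq_or_eq_neg, Real.sq_sqrt ha.le]
  have hsqrt : 0 < √a := Real.sqrt_pos.2 ha
  rw [hset, Set.ncard_pair (by linarith)]

lemma ncard_projRoots_quad_mul_quad (a b : ℝ) :
    (projRoots (quad 1 0 a * quad 1 0 b)).ncard =
      ({t : ℝ | t ^ 2 = -a} ∪ {t | t ^ 2 = -b}).ncard := by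
  rw [ncard_projRoots_eq_ncard_affine ((isHomogeneous_quad 1 0 a).mul (isHomogeneous_quad 1 0 b))
    (by simp [quad])]
  congr 1
  ext t
  simp [quad, eq_neg_iff_add_eq_zero]

lemma ncard_projRoots_of_pos_of_pos (ha : 0 < a) (hb : 0 < b) :
    (projRoots (quad 1 0 a * quad 1 0 b)).ncard = 0 := by
  rw [ncard_projRoots_quad_mul_quad, setOf_sq_eq_eq_empty (neg_lt_zero.2 ha),
    setOf_sq_eq_eq_empty (neg_lt_zero.2 hb), Set.union_self, Set.ncard_empty]

lemma ncard_projRoots_of_pos_of_neg (ha : 0 < a) (hb : b < 0) :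
    (projRoots (quad 1 0 a * quad 1 0 b)).ncard = 2 := by
  rw [ncard_projRoots_quad_mul_quad, setOf_sq_eq_eq_empty (neg_lt_zero.2 ha), Set.empty_union,
    ncard_setOf_sq_eq (neg_pos.2 hb)]

lemma ncard_projRoots_of_neg_of_neg (ha : a < 0) (hb : b < 0) (hab : a ≠ b) :
    (projRoots (quad 1 0 a * quad 1 0 b)).ncard = 4 := by
  have hcard_a := ncard_setOf_sq_eq (neg_pos.2 ha)
  have hcard_b := ncard_setOf_sq_eq (neg_pos.2 hb)
  have hdisj : Disjoint {t : ℝ | t ^ 2 = -a} {t | t ^ 2 = -b} :=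
    Set.disjoint_left.2 fun t hta htb ↦ hab (neg_injective (hta.symm.trans htb))
  rw [ncard_projRoots_quad_mul_quad, Set.ncard_union_eq hdisj
    (Set.finite_of_ncard_pos (by omega)) (Set.finite_of_ncard_pos (by omega)), hcard_a, hcard_b]

lemma ne_of_squarefree_quad_mul_quad (h : Squarefree (quad 1 0 a * quad 1 0 b)) : a ≠ b := by
  rintro rfl
  exact eval_zero_ne_zero_of_mul_self_dvd h dvd_rfl (by simp [quad])

end RootCount

/-- canonical forms for real binary quartics with distinct roots,
according to the number of distinct real roots (0, 2, or 4). -/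
theorem stmt6 (f : MvPolynomial (Fin 2) ℝ) (hf : f.IsHomogeneous 4)
    (hsf : SquarefreeC f) :
    ((projRoots f).ncard = 0 →
      ∃ (A : Matrix (Fin 2) (Fin 2) ℝ) (lam a : ℝ), IsUnit A.det ∧ lam ≠ 0 ∧ 0 < a ∧
        C lam * subst A f = (X 0 ^ 2 + X 1 ^ 2) * (X 0 ^ 2 + C a * X 1 ^ 2)) ∧
    ((projRoots f).ncard = 2 →
      ∃ (A : Matrix (Fin 2) (Fin 2) ℝ) (lam a : ℝ), IsUnit A.det ∧ lam ≠ 0 ∧ a < 0 ∧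
        C lam * subst A f = (X 0 ^ 2 + X 1 ^ 2) * (X 0 ^ 2 + C a * X 1 ^ 2)) ∧
    ((projRoots f).ncard = 4 →
      ∃ (A : Matrix (Fin 2) (Fin 2) ℝ) (lam a : ℝ), IsUnit A.det ∧ lam ≠ 0 ∧ a < 0 ∧
        C lam * subst A f = (X 0 ^ 2 - X 1 ^ 2) * (X 0 ^ 2 + C a * X 1 ^ 2)) := by
  rcases formEquiv_canonical hf hsf.squarefree with ⟨a, ha, h⟩ | ⟨a, ha, h⟩ | ⟨a, ha, h⟩
  · have hcard := (h.ncard_projRoots hf).trans (ncard_projRoots_of_pos_of_pos one_pos ha)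
    obtain ⟨A, lam, hA, hlam, heq⟩ := h
    refine ⟨fun _ ↦ ⟨A, lam, a, hA, hlam, ha, by simpa [quad] using heq⟩, ?_, ?_⟩ <;> omega
  · have hcard := (h.ncard_projRoots hf).trans (ncard_projRoots_of_pos_of_neg one_pos ha)
    obtain ⟨A, lam, hA, hlam, heq⟩ := h
    refine ⟨?_, fun _ ↦ ⟨A, lam, a, hA, hlam, ha, by simpa [quad] using heq⟩, ?_⟩ <;> omega
  · have hne : -1 ≠ a := ne_of_squarefree_quad_mul_quad (h.squarefree hsf.squarefree)
    have hcard := (h.ncard_projRoots hf).trans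
      (ncard_projRoots_of_neg_of_neg neg_one_lt_zero ha hne)
    obtain ⟨A, lam, hA, hlam, heq⟩ := h
    refine ⟨?_, ?_, fun _ ↦ ⟨A, lam, a, hA, hlam, ha, ?_⟩⟩
    · omega
    · omega
    · simpa [quad, sub_eq_add_neg] using heq
end
end

section
/- Canonical forms for real binary quintics: let f be a real binary quintic with distinct roots (squarefree over ℂ). (1) If f has exactly one real root, there exist A ∈ GL₂(ℝ), λ ∈ ℝ \ {0} and a, b ∈ ℝ with b − a² > 0 such that λ·f(A(x,y)) = x(x²+y²)(x²+2axy+by²). (2) If f has exactly three distinct real roots, there exist A ∈ GL₂(ℝ), λ ≠ 0 and a, b with b − a² < 0 such that λ·f(A(x,y)) = x(x²+y²)(x²+2axy+by²). (3) If f has five distinct real roots, there exist A ∈ GL₂(ℝ), λ ≠ 0 and a, b with b − a² < 0 such that λ·f(A(x,y)) = x(x²−y²)(x²+2axy+by²). -/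
open MvPolynomial

noncomputable section

/-!
Let `ℓ_u` be the linear form with root `u`, and let `f = c ℓ_u Q R` with `Q`, `R` quadratic forms.
If `w` is `Q`-orthogonal to `u` and scaled so that `Q(u) = ±Q(w)`, then in the coordinates
`(x, y) ↦ x w + y u` the factor `ℓ_u Q` becomes a multiple of `x (x² ± y²)`, and `R` becomes a
multiple of `x² + 2 a x y + b y²` as soon as `R(w) ≠ 0`. The sign of `b - a²` is that of `det R`.

With one real root, `Q` and `R` are the definite factors. With three, `Q` is the definite factor and
`R(w) ≠ 0` says that neither of the other two roots is `Q`-orthogonal to `u`; at most one pair among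
the three roots is `Q`-orthogonal, so some choice of `u` works. With five, let `Q` vanish at two
neighbouring roots on the projective line. Then `Q` has the same sign at the three others, and
`Q(s) Q(t) - Q(s, t)² = det Q · [s, t]² ≤ 0` shows that no two of these are `Q`-orthogonal.
-/

/-- The area form on `ℝ²`, that is, the determinant of the matrix with columns `u`, `v`. Two nonzero
vectors represent the same projective point exactly when it vanishes. -/
def bracket (u v : Fin 2 → ℝ) : ℝ := u 0 * v 1 - u 1 * v 0

lemma bracket_eq_zero_iff_exists_smul {u v : Fin 2 → ℝ} (hu : u ≠ 0) :
    bracket u v = 0 ↔ ∃ t : ℝ, t • u = v := by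
  refine ⟨fun h ↦ ?_, ?_⟩
  · have h' : u 0 * v 1 = u 1 * v 0 := sub_eq_zero.mp h
    by_cases h0 : u 0 = 0
    · have h1 : u 1 ≠ 0 := fun h1 ↦ hu (by ext i; fin_cases i <;> assumption)
      have hv : v 0 = 0 := by simpa [h0, h1, eq_comm] using h'
      refine ⟨v 1 / u 1, ?_⟩
      ext i; fin_cases i
      · simp [h0, hv]
      · simp [h1]
    · refine ⟨v 0 / u 0, ?_⟩
      ext i; fin_cases i
      · simp [h0]
      · simp only [Fin.mk_one, Pi.smul_apply, smul_eq_mul]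
        field_simp
        linarith
  · rintro ⟨t, rfl⟩
    simp only [bracket, Pi.smul_apply, smul_eq_mul]
    ring

lemma ne_zero_of_bracket_ne_zero_left {u v : Fin 2 → ℝ} (h : bracket u v ≠ 0) : u ≠ 0 := by
  rintro rfl
  simp [bracket] at h

lemma ne_zero_of_bracket_ne_zero_right {u v : Fin 2 → ℝ} (h : bracket u v ≠ 0) : v ≠ 0 := by
  rintro rfl
  simp [bracket] at h

lemma exists_bracket_ne_zero {u : Fin 2 → ℝ} (hu : u ≠ 0) : ∃ v, bracket u v ≠ 0 := by
  by_contra! h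
  have h0 : u 0 = 0 := by simpa [bracket] using h ![0, 1]
  have h1 : u 1 = 0 := by simpa [bracket] using h ![1, 0]
  exact hu (by ext i; fin_cases i <;> assumption)

lemma bracket_smul_right (t : ℝ) (u v : Fin 2 → ℝ) : bracket u (t • v) = t * bracket u v := by
  simp only [bracket, Pi.smul_apply, smul_eq_mul]
  ring

lemma dotProduct_self_mul_bracket (u v w : Fin 2 → ℝ) :
    u ⬝ᵥ u * bracket v w = u ⬝ᵥ v * bracket u w - bracket u v * u ⬝ᵥ w := by
  simp only [bracket, Matrix.vec2_dotProduct]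
  ring

-- The maximum of the slope `(v o ⬝ᵥ v i) / bracket (v o) (v i)` is attained at a neighbour of `v o`
-- on the projective line, so no other point lies on one of the two arcs they bound.
lemma exists_neighbour {ι : Type*} [Finite ι] [Nontrivial ι] {v : ι → Fin 2 → ℝ}
    (hv : Pairwise fun i j ↦ bracket (v i) (v j) ≠ 0) (o : ι) :
    ∃ j ≠ o, ∀ i ≠ o, i ≠ j →
      0 < bracket (v o) (v j) * (bracket (v o) (v i) * bracket (v j) (v i)) := by
  set slope : ι → ℝ := fun i ↦ (v o ⬝ᵥ v i) / bracket (v o) (v i) with hslope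
  obtain ⟨j, hjo, hmax⟩ :=
    Set.exists_max_image {i | i ≠ o} slope (Set.toFinite _) (exists_ne o)
  refine ⟨j, hjo, fun i hio hij ↦ ?_⟩
  have hoj : bracket (v o) (v j) ≠ 0 := hv hjo.symm
  have hoi : bracket (v o) (v i) ≠ 0 := hv hio.symm
  have hpos : 0 < v o ⬝ᵥ v o :=
    (Finset.sum_nonneg fun k _ ↦ mul_self_nonneg (v o k)).lt_of_ne' <|
      dotProduct_self_eq_zero.not.mpr (ne_zero_of_bracket_ne_zero_left hoi)
  have hdiff : v o ⬝ᵥ v o * (bracket (v o) (v j) * (bracket (v o) (v i) * bracket (v j) (v i))) =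
      (bracket (v o) (v j) * bracket (v o) (v i)) ^ 2 * (slope j - slope i) := by
    rw [hslope]
    field_simp
    linear_combination dotProduct_self_mul_bracket (v o) (v j) (v i)
  refine lt_of_le_of_ne (nonneg_of_mul_nonneg_right (hdiff ▸ ?_) hpos)
    (mul_ne_zero hoj (mul_ne_zero hoi (hv hij.symm))).symm
  exact mul_nonneg (sq_nonneg _) (sub_nonneg.mpr (hmax i hio))

/-- The linear form `x ↦ bracket u x`, whose projective root is `[u]`. -/
def linForm (u : Fin 2 → ℝ) : MvPolynomial (Fin 2) ℝ := lin (-u 1) (u 0)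

@[simp]
lemma eval_linForm (u x : Fin 2 → ℝ) : eval x (linForm u) = bracket u x := by
  simp only [linForm, lin, bracket, map_add, map_mul, eval_C, eval_X]
  ring

lemma linForm_smul (t : ℝ) (u : Fin 2 → ℝ) : linForm (t • u) = C t * linForm u := by
  simp only [linForm, lin, Pi.smul_apply, smul_eq_mul, C_mul, C_neg]
  ring

lemma SquarefreeC.not_linForm_sq_dvd {f : MvPolynomial (Fin 2) ℝ} (hf : SquarefreeC f)
    (u : Fin 2 → ℝ) : ¬ linForm u ^ 2 ∣ f := by
  intro h
  have hunit := hf (MvPolynomial.map (algebraMap ℝ ℂ) (linForm u)) <| by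
    rw [← map_mul, ← sq]
    exact map_dvd _ h
  simpa [linForm, lin] using hunit.map (eval (0 : Fin 2 → ℂ))

/-- The real binary quadratic form `a x² + 2 b x y + c y²`, stored by its coefficients. The middle
coefficient is halved, so these are the entries of the Gram matrix. -/
structure BinaryQuadratic where
  a : ℝ
  b : ℝ
  c : ℝ

namespace BinaryQuadratic

variable (Q : BinaryQuadratic) (u v w : Fin 2 → ℝ)

/-- The polynomial `a x² + 2 b x y + c y²`. -/
def form : MvPolynomial (Fin 2) ℝ := C Q.a * X 0 ^ 2 + C (2 * Q.b) * X 0 * X 1 + C Q.c * X 1 ^ 2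

/-- The symmetric bilinear form whose value on the diagonal is the quadratic form. -/
def bilin : ℝ := Q.a * u 0 * v 0 + Q.b * (u 0 * v 1 + u 1 * v 0) + Q.c * u 1 * v 1

/-- The determinant of the Gram matrix, positive exactly for definite forms. -/
def det : ℝ := Q.a * Q.c - Q.b ^ 2

/-- A vector `Q`-orthogonal to `u`, obtained by rotating the gradient of `Q` at `u`. -/
def perp : Fin 2 → ℝ := ![-(Q.b * u 0 + Q.c * u 1), Q.a * u 0 + Q.b * u 1]

/-- The product of the linear forms with roots `u` and `v`. -/
def ofRoots : BinaryQuadratic := ⟨u 1 * v 1, -(u 0 * v 1 + u 1 * v 0) / 2, u 0 * v 0⟩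

@[simp]
lemma eval_form (x : Fin 2 → ℝ) : eval x Q.form = Q.bilin x x := by
  simp only [form, bilin, map_add, map_mul, map_pow, eval_C, eval_X]
  ring

lemma bilin_comm : Q.bilin u v = Q.bilin v u := by
  simp only [bilin]
  ring

lemma bilin_smul_left (t : ℝ) : Q.bilin (t • u) v = t * Q.bilin u v := by
  simp only [bilin, Pi.smul_apply, smul_eq_mul]
  ring

lemma bilin_smul_right (t : ℝ) : Q.bilin u (t • v) = t * Q.bilin u v := by
  rw [bilin_comm, bilin_smul_left, bilin_comm]

lemma bilin_smul_add_smul_self (s t : ℝ) :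
    Q.bilin (s • u + t • v) (s • u + t • v) =
      Q.bilin u u * s ^ 2 + 2 * Q.bilin u v * s * t + Q.bilin v v * t ^ 2 := by
  simp only [bilin, Pi.add_apply, Pi.smul_apply, smul_eq_mul]
  ring

lemma gram_det : Q.bilin u u * Q.bilin v v - Q.bilin u v ^ 2 = Q.det * bracket u v ^ 2 := by
  simp only [bilin, det, bracket]
  ring

lemma bracket_perp : bracket v (Q.perp u) = Q.bilin u v := by
  simp only [bracket, perp, bilin, Matrix.cons_val_zero, Matrix.cons_val_one,
    Matrix.cons_val_fin_one]
  ring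

lemma bilin_perp : Q.bilin u (Q.perp u) = 0 := by
  simp only [bilin, perp, Matrix.cons_val_zero, Matrix.cons_val_one, Matrix.cons_val_fin_one]
  ring

lemma bilin_perp_self : Q.bilin (Q.perp u) (Q.perp u) = Q.det * Q.bilin u u := by
  simp only [bilin, perp, det, Matrix.cons_val_zero, Matrix.cons_val_one, Matrix.cons_val_fin_one]
  ring

lemma form_ofRoots : (ofRoots u v).form = linForm u * linForm v := by
  refine MvPolynomial.funext fun x ↦ ?_
  simp only [eval_form, map_mul, eval_linForm, bilin, ofRoots, bracket]
  ring

lemma bilin_ofRoots_self : (ofRoots u v).bilin w w = bracket u w * bracket v w := by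
  simp only [bilin, ofRoots, bracket]
  ring

lemma det_ofRoots : (ofRoots u v).det = -(bracket u v / 2) ^ 2 := by
  simp only [det, ofRoots, bracket]
  ring

variable {Q u v w}

lemma det_ofRoots_neg (h : bracket u v ≠ 0) : (ofRoots u v).det < 0 := by
  rw [det_ofRoots]
  exact neg_neg_of_pos (by positivity)

lemma bilin_self_ne_zero (hQ : 0 < Q.det) (hu : u ≠ 0) : Q.bilin u u ≠ 0 := by
  intro h
  obtain ⟨v, hv⟩ := exists_bracket_ne_zero hu
  have hgram := Q.gram_det u v
  rw [h, zero_mul, zero_sub] at hgram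
  have : 0 < Q.det * bracket u v ^ 2 := by positivity
  linarith [sq_nonneg (Q.bilin u v)]

lemma bilin_ne_zero_of_det_neg (hQ : Q.det < 0) (h : 0 < Q.bilin u u * Q.bilin v v) :
    Q.bilin u v ≠ 0 := by
  intro h0
  have hgram := Q.gram_det u v
  rw [h0] at hgram
  linarith [mul_nonpos_of_nonpos_of_nonneg hQ.le (sq_nonneg (bracket u v))]

lemma bilin_ne_zero_of_bilin_eq_zero (hQ : 0 < Q.det) (hu : u ≠ 0) (hvw : bracket v w ≠ 0)
    (hv : Q.bilin u v = 0) : Q.bilin u w ≠ 0 := by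
  intro hw
  refine mul_ne_zero (bilin_self_ne_zero hQ hu) hvw ?_
  simp only [bilin, bracket] at hv hw ⊢
  linear_combination (u 0 * w 1 - u 1 * w 0) * hv - (u 0 * v 1 - u 1 * v 0) * hw

end BinaryQuadratic

open BinaryQuadratic

lemma eval_subst_of_columns (u v x : Fin 2 → ℝ) (f : MvPolynomial (Fin 2) ℝ) :
    eval x (subst !![u 0, v 0; u 1, v 1] f) = eval (x 0 • u + x 1 • v) f := by
  rw [subst, map_aeval, eval]
  congr 2
  · ext; simp
  · ext i; fin_cases i <;> simp [mul_comm (x _)]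

/-- `f` is equivalent, up to a nonzero scalar and a real change of variables, to
`x · q · (x² + 2 a x y + b y²)` for some `a`, `b` whose `b - a²` satisfies `P`. -/
def HasCanonicalForm (f q : MvPolynomial (Fin 2) ℝ) (P : ℝ → Prop) : Prop :=
  ∃ (A : Matrix (Fin 2) (Fin 2) ℝ) (lam a b : ℝ), IsUnit A.det ∧ lam ≠ 0 ∧ P (b - a ^ 2) ∧
    C lam * subst A f = X 0 * q * (X 0 ^ 2 + C (2 * a) * X 0 * X 1 + C b * X 1 ^ 2)

section CanonicalForm

variable {c d ε : ℝ} {u w : Fin 2 → ℝ} {Q R : BinaryQuadratic} {P : ℝ → Prop}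

lemma hasCanonicalForm_of_orthogonal (hc : c ≠ 0) (huw : bracket u w ≠ 0)
    (hQuw : Q.bilin u w = 0) (hQ : Q.bilin u u = ε * Q.bilin w w) (hQw : Q.bilin w w ≠ 0)
    (hRw : R.bilin w w ≠ 0) (hP : ∀ k > 0, P (k * R.det)) :
    HasCanonicalForm (C c * linForm u * Q.form * R.form) (X 0 ^ 2 + C ε * X 1 ^ 2) P := by
  refine ⟨!![w 0, u 0; w 1, u 1], (c * bracket u w * Q.bilin w w * R.bilin w w)⁻¹,
    R.bilin w u / R.bilin w w, R.bilin u u / R.bilin w w, ?_, by positivity, ?_, ?_⟩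
  · rw [isUnit_iff_ne_zero, Matrix.det_fin_two_of]
    contrapose! huw
    rw [bracket]
    linarith
  · convert hP (bracket w u ^ 2 / R.bilin w w ^ 2) ?_ using 1
    · have hgram := R.gram_det w u
      field_simp
      linear_combination hgram
    · have : bracket w u ≠ 0 := by
        contrapose! huw
        rw [bracket] at huw ⊢
        linarith
      positivity
  · refine MvPolynomial.funext fun x ↦ ?_
    have hlin : bracket u (x 0 • w + x 1 • u) = bracket u w * x 0 := by
      simp only [bracket, Pi.add_apply, Pi.smul_apply, smul_eq_mul]
      ring
    simp only [map_mul, map_add, map_pow, eval_C, eval_X, eval_subst_of_columns, eval_linForm,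
      eval_form, hlin, bilin_smul_add_smul_self, Q.bilin_comm w u, hQuw, hQ]
    field_simp
    ring

lemma hasCanonicalForm_of_perp (hc : c ≠ 0) (hd : d ≠ 0) (hdet : ε * Q.det = d ^ 2)
    (hQ : Q.bilin u u ≠ 0) (hR : R.bilin (Q.perp u) (Q.perp u) ≠ 0)
    (hP : ∀ k > 0, P (k * R.det)) :
    HasCanonicalForm (C c * linForm u * Q.form * R.form) (X 0 ^ 2 + C ε * X 1 ^ 2) P := by
  have hε : Q.bilin u u = ε * Q.bilin (d⁻¹ • Q.perp u) (d⁻¹ • Q.perp u) := by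
    rw [bilin_smul_left, bilin_smul_right, bilin_perp_self]
    field_simp
    exact hdet.symm
  refine hasCanonicalForm_of_orthogonal (w := d⁻¹ • Q.perp u) hc ?_ ?_ hε ?_ ?_ hP
  · rw [bracket_smul_right, bracket_perp]
    positivity
  · rw [bilin_smul_right, bilin_perp, mul_zero]
  · exact right_ne_zero_of_mul (hε ▸ hQ)
  · rw [bilin_smul_left, bilin_smul_right]
    positivity

lemma hasCanonicalForm_of_det_pos (hc : c ≠ 0) (hQ : 0 < Q.det) (hu : u ≠ 0)
    (hR : R.bilin (Q.perp u) (Q.perp u) ≠ 0) (hP : ∀ k > 0, P (k * R.det)) :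
    HasCanonicalForm (C c * linForm u * Q.form * R.form) (X 0 ^ 2 + X 1 ^ 2) P := by
  have h := hasCanonicalForm_of_perp (ε := 1) hc (Real.sqrt_ne_zero'.mpr hQ)
    (by rw [Real.sq_sqrt hQ.le, one_mul]) (bilin_self_ne_zero hQ hu) hR hP
  rwa [C_1, one_mul] at h

end CanonicalForm

/-- A factorization of the binary form `f` into a nonzero constant, `k` real linear forms, given by
their roots, and `m` definite quadratic forms. -/
structure RealFactorization (k m : ℕ) (f : MvPolynomial (Fin 2) ℝ) where
  coeff : ℝ
  root : Fin k → Fin 2 → ℝ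
  quad : Fin m → BinaryQuadratic
  coeff_ne_zero : coeff ≠ 0
  root_ne_zero (i : Fin k) : root i ≠ 0
  quad_det_pos (j : Fin m) : 0 < (quad j).det
  eq_prod : f = C coeff * (∏ i, linForm (root i)) * ∏ j, (quad j).form

namespace RealFactorization

variable {k l m n : ℕ} {f g : MvPolynomial (Fin 2) ℝ}

/-- The trivial factorization of a nonzero constant. -/
def const {c : ℝ} (hc : c ≠ 0) : RealFactorization 0 0 (C c) where
  coeff := c
  root := Fin.elim0
  quad := Fin.elim0
  coeff_ne_zero := hc
  root_ne_zero i := i.elim0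
  quad_det_pos j := j.elim0
  eq_prod := by simp

/-- The factorization of a linear form with itself as its only factor. -/
def ofLinForm {u : Fin 2 → ℝ} (hu : u ≠ 0) : RealFactorization 1 0 (linForm u) where
  coeff := 1
  root _ := u
  quad := Fin.elim0
  coeff_ne_zero := one_ne_zero
  root_ne_zero _ := hu
  quad_det_pos j := j.elim0
  eq_prod := by simp

/-- The factorization of a definite quadratic form with itself as its only factor. -/
def ofForm {Q : BinaryQuadratic} (hQ : 0 < Q.det) : RealFactorization 0 1 Q.form where
  coeff := 1
  root := Fin.elim0
  quad _ := Q
  coeff_ne_zero := one_ne_zero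
  root_ne_zero i := i.elim0
  quad_det_pos _ := hQ
  eq_prod := by simp

/-- The concatenation of two factorizations, which factorizes the product. -/
def mul (F : RealFactorization k m f) (G : RealFactorization l n g) :
    RealFactorization (k + l) (m + n) (f * g) where
  coeff := F.coeff * G.coeff
  root := Fin.append F.root G.root
  quad := Fin.append F.quad G.quad
  coeff_ne_zero := mul_ne_zero F.coeff_ne_zero G.coeff_ne_zero
  root_ne_zero i := by
    refine Fin.addCases (fun i ↦ ?_) (fun i ↦ ?_) i
    · simpa only [Fin.append_left] using F.root_ne_zero i
    · simpa only [Fin.append_right] using G.root_ne_zero i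
  quad_det_pos j := by
    refine Fin.addCases (fun j ↦ ?_) (fun j ↦ ?_) j
    · simpa only [Fin.append_left] using F.quad_det_pos j
    · simpa only [Fin.append_right] using G.quad_det_pos j
  eq_prod := by
    conv_lhs => rw [F.eq_prod, G.eq_prod]
    simp only [Fin.prod_univ_add, Fin.append_left, Fin.append_right, C_mul]
    ring

/-- The same factorization with the linear factors permuted. -/
def reindex (F : RealFactorization k m f) (σ : Equiv.Perm (Fin k)) : RealFactorization k m f where
  coeff := F.coeff
  root := F.root ∘ σ
  quad := F.quad
  coeff_ne_zero := F.coeff_ne_zero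
  root_ne_zero i := F.root_ne_zero (σ i)
  quad_det_pos := F.quad_det_pos
  eq_prod := by
    simpa only [Function.comp_apply, Equiv.prod_comp σ fun i ↦ linForm (F.root i)] using F.eq_prod

lemma bracket_root_ne_zero (F : RealFactorization k m f) (hf : ∀ u, ¬ linForm u ^ 2 ∣ f) :
    Pairwise fun i j ↦ bracket (F.root i) (F.root j) ≠ 0 := by
  intro i j hij h
  obtain ⟨t, ht⟩ := (bracket_eq_zero_iff_exists_smul (F.root_ne_zero i)).mp h
  have hsq : linForm (F.root i) ^ 2 ∣ linForm (F.root i) * linForm (F.root j) := by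
    rw [← ht, linForm_smul, sq]
    exact mul_dvd_mul_left _ (dvd_mul_left _ _)
  have hpair : linForm (F.root i) * linForm (F.root j) ∣ ∏ s, linForm (F.root s) := by
    rw [← Finset.prod_pair (f := fun s ↦ linForm (F.root s)) hij]
    exact Finset.prod_dvd_prod_of_subset _ _ _ (Finset.subset_univ _)
  have hprod : ∏ s, linForm (F.root s) ∣ f := by
    conv_rhs => rw [F.eq_prod]
    exact (dvd_mul_left _ _).mul_right _
  exact hf (F.root i) ((hsq.trans hpair).trans hprod)

lemma eval_eq_zero_iff (F : RealFactorization k m f) {x : Fin 2 → ℝ} (hx : x ≠ 0) :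
    eval x f = 0 ↔ ∃ i, bracket (F.root i) x = 0 := by
  have hquad : ∏ j, (F.quad j).bilin x x ≠ 0 :=
    Finset.prod_ne_zero_iff.mpr fun j _ ↦ bilin_self_ne_zero (F.quad_det_pos j) hx
  conv_lhs => rw [F.eq_prod]
  simp only [map_mul, map_prod, eval_C, eval_linForm, eval_form, mul_eq_zero, F.coeff_ne_zero,
    hquad, false_or, or_false, Finset.prod_eq_zero_iff, Finset.mem_univ, true_and]

lemma ncard_projRoots (F : RealFactorization k m f)
    (hF : Pairwise fun i j ↦ bracket (F.root i) (F.root j) ≠ 0) : (projRoots f).ncard = k := by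
  set point : Fin k → Projectivization ℝ (Fin 2 → ℝ) :=
    fun i ↦ .mk ℝ (F.root i) (F.root_ne_zero i) with hpoint
  have hrange : projRoots f = Set.range point := by
    ext p
    refine (F.eval_eq_zero_iff p.rep_nonzero).trans (exists_congr fun i ↦ ?_)
    rw [bracket_eq_zero_iff_exists_smul (F.root_ne_zero i), hpoint, eq_comm]
    conv_rhs => rw [← p.mk_rep]
    rw [Projectivization.mk_eq_mk_iff']
  have hinj : Function.Injective point := by
    intro i j hij
    by_contra hne
    refine hF (Ne.symm hne) ?_
    rw [bracket_eq_zero_iff_exists_smul (F.root_ne_zero j)]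
    exact (Projectivization.mk_eq_mk_iff' ..).mp hij
  rw [hrange, ← Nat.card_coe_set_eq, Nat.card_range_of_injective hinj, Nat.card_fin]

end RealFactorization

/-- The binary form `f` of degree `n` is a product of real linear and definite quadratic forms. -/
def HasRealFactorization (n : ℕ) (f : MvPolynomial (Fin 2) ℝ) : Prop :=
  ∃ k m, k + 2 * m = n ∧ Nonempty (RealFactorization k m f)

lemma HasRealFactorization.mul {m n : ℕ} {f g : MvPolynomial (Fin 2) ℝ}
    (hf : HasRealFactorization m f) (hg : HasRealFactorization n g) :
    HasRealFactorization (m + n) (f * g) := by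
  obtain ⟨k, p, rfl, ⟨F⟩⟩ := hf
  obtain ⟨l, q, rfl, ⟨G⟩⟩ := hg
  exact ⟨k + l, p + q, by ring, ⟨F.mul G⟩⟩

lemma hasRealFactorization_C {c : ℝ} (hc : c ≠ 0) : HasRealFactorization 0 (C c) :=
  ⟨0, 0, rfl, ⟨.const hc⟩⟩

lemma hasRealFactorization_linForm {u : Fin 2 → ℝ} (hu : u ≠ 0) :
    HasRealFactorization 1 (linForm u) :=
  ⟨1, 0, rfl, ⟨.ofLinForm hu⟩⟩

lemma hasRealFactorization_form {Q : BinaryQuadratic} (hQ : 0 < Q.det) :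
    HasRealFactorization 2 Q.form :=
  ⟨0, 1, rfl, ⟨.ofForm hQ⟩⟩

lemma hasRealFactorization_X_one_pow (n : ℕ) : HasRealFactorization n (X 1 ^ n) := by
  induction n with
  | zero => simpa using hasRealFactorization_C one_ne_zero
  | succ n ih =>
    have hX : linForm ![1, 0] = X 1 := by simp [linForm, lin]
    rw [pow_succ, ← hX]
    rw [← hX] at ih
    exact ih.mul (hasRealFactorization_linForm (by simp))

lemma discrim_neg_of_irreducible {q : Polynomial ℝ} (hq : Irreducible q) (hdeg : q.natDegree = 2) :
    discrim (q.coeff 2) (q.coeff 1) (q.coeff 0) < 0 := by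
  by_contra! hdiscrim
  have hlead : q.coeff 2 ≠ 0 := hdeg ▸ Polynomial.leadingCoeff_ne_zero.mpr hq.ne_zero
  obtain ⟨x, hx⟩ := exists_quadratic_eq_zero hlead ⟨_, (Real.mul_self_sqrt hdiscrim).symm⟩
  have hroot : q.IsRoot x := by
    rw [Polynomial.IsRoot, Polynomial.eq_quadratic_of_degree_le_two hq.degree_le_two]
    simpa [sq] using hx
  exact hq.not_isRoot_of_natDegree_ne_one (by lia) hroot

lemma homogenize_two_eq_form {q : Polynomial ℝ} (hq : q.degree ≤ 2) :
    q.homogenize 2 = (⟨q.coeff 2, q.coeff 1 / 2, q.coeff 0⟩ : BinaryQuadratic).form := by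
  conv_lhs => rw [Polynomial.eq_quadratic_of_degree_le_two hq]
  simp [form, mul_div_cancel₀, mul_assoc]

lemma hasRealFactorization_homogenize_of_irreducible {q : Polynomial ℝ} (hq : Irreducible q) :
    HasRealFactorization q.natDegree (q.homogenize q.natDegree) := by
  have hdeg : q.natDegree = 1 ∨ q.natDegree = 2 := by
    have := hq.natDegree_pos
    have := hq.natDegree_le_two
    lia
  rcases hdeg with hdeg | hdeg
  · have hlead : q.coeff 1 ≠ 0 := hdeg ▸ Polynomial.leadingCoeff_ne_zero.mpr hq.ne_zero
    convert hasRealFactorization_linForm (u := ![q.coeff 0, -q.coeff 1]) (by simp [hlead]) using 1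
    rw [hdeg, Polynomial.eq_X_add_C_of_natDegree_le_one hdeg.le]
    simp [linForm, lin]
  · have hdet : 0 < (⟨q.coeff 2, q.coeff 1 / 2, q.coeff 0⟩ : BinaryQuadratic).det := by
      have := discrim_neg_of_irreducible hq hdeg
      rw [discrim] at this
      rw [BinaryQuadratic.det]
      linarith
    rw [hdeg, homogenize_two_eq_form hq.degree_le_two]
    exact hasRealFactorization_form hdet

lemma hasRealFactorization_homogenize_natDegree {p : Polynomial ℝ} (hp : p ≠ 0) :
    HasRealFactorization p.natDegree (p.homogenize p.natDegree) := by
  induction p using WfDvdMonoid.induction_on_irreducible with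
  | zero => contradiction
  | unit p hunit =>
    obtain ⟨c, hc, rfl⟩ := Polynomial.isUnit_iff.mp hunit
    simpa using hasRealFactorization_C hc.ne_zero
  | mul p q hp0 hq ih =>
    rw [Polynomial.natDegree_mul hq.ne_zero hp0, Polynomial.homogenize_mul q p le_rfl le_rfl]
    exact (hasRealFactorization_homogenize_of_irreducible hq).mul (ih hp0)

lemma hasRealFactorization_homogenize {p : Polynomial ℝ} (hp : p ≠ 0) {n : ℕ}
    (hn : p.natDegree ≤ n) : HasRealFactorization n (p.homogenize n) := by
  obtain ⟨r, rfl⟩ := Nat.exists_eq_add_of_le hn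
  have hmul := Polynomial.homogenize_mul p 1 (n := r) le_rfl (by simp)
  rw [mul_one, Polynomial.homogenize_one] at hmul
  rw [hmul]
  exact (hasRealFactorization_homogenize_natDegree hp).mul (hasRealFactorization_X_one_pow r)

lemma hasRealFactorization_of_isHomogeneous {n : ℕ} {f : MvPolynomial (Fin 2) ℝ}
    (hf : f.IsHomogeneous n) (hf0 : f ≠ 0) : HasRealFactorization n f := by
  set p : Polynomial ℝ := aeval ![Polynomial.X, 1] f with hp
  have hpf : p.homogenize n = f := Polynomial.homogenize_eq_of_isHomogeneous hf hp.symm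
  have hdeg : p.natDegree ≤ n := by
    refine (aeval_natDegree_le (n := 1) f hf.totalDegree_le _ fun i ↦ ?_).trans_eq (mul_one n)
    fin_cases i <;> simp
  rw [← hpf] at hf0 ⊢
  exact hasRealFactorization_homogenize (by rintro h; simp [h] at hf0) hdeg

section Quintic

variable {f : MvPolynomial (Fin 2) ℝ}

lemma hasCanonicalForm_of_three_roots_of_bilin_ne_zero {c : ℝ} {u v w : Fin 2 → ℝ}
    {Q : BinaryQuadratic} (hc : c ≠ 0) (hQ : 0 < Q.det) (hu : u ≠ 0) (hvw : bracket v w ≠ 0)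
    (hv : Q.bilin u v ≠ 0) (hw : Q.bilin u w ≠ 0) :
    HasCanonicalForm (C c * linForm u * linForm v * linForm w * Q.form) (X 0 ^ 2 + X 1 ^ 2)
      (· < 0) := by
  have hperp : (ofRoots v w).bilin (Q.perp u) (Q.perp u) ≠ 0 := by
    rw [bilin_ofRoots_self, bracket_perp, bracket_perp]
    exact mul_ne_zero hv hw
  convert hasCanonicalForm_of_det_pos (P := (· < 0)) hc hQ hu hperp
    (fun k hk ↦ mul_neg_of_pos_of_neg hk (det_ofRoots_neg hvw)) using 1
  rw [form_ofRoots]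
  ring

namespace RealFactorization

theorem hasCanonicalForm_of_one_root (F : RealFactorization 1 2 f) :
    HasCanonicalForm f (X 0 ^ 2 + X 1 ^ 2) (0 < ·) := by
  have hu := F.root_ne_zero 0
  have hperp : (F.quad 0).perp (F.root 0) ≠ 0 := by
    refine ne_zero_of_bracket_ne_zero_right (u := F.root 0) ?_
    rw [bracket_perp]
    exact bilin_self_ne_zero (F.quad_det_pos 0) hu
  convert hasCanonicalForm_of_det_pos F.coeff_ne_zero (F.quad_det_pos 0) hu
    (bilin_self_ne_zero (F.quad_det_pos 1) hperp)
    (fun k hk ↦ mul_pos hk (F.quad_det_pos 1)) using 1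
  conv_lhs => rw [F.eq_prod, Fin.prod_univ_one, Fin.prod_univ_two]
  ring

theorem hasCanonicalForm_of_three_roots (F : RealFactorization 3 1 f)
    (hF : Pairwise fun i j ↦ bracket (F.root i) (F.root j) ≠ 0) :
    HasCanonicalForm f (X 0 ^ 2 + X 1 ^ 2) (· < 0) := by
  set Q := F.quad 0
  have hQ : 0 < Q.det := F.quad_det_pos 0
  have h01 := hF (show (0 : Fin 3) ≠ 1 by decide)
  have h02 := hF (show (0 : Fin 3) ≠ 2 by decide)
  have h12 := hF (show (1 : Fin 3) ≠ 2 by decide)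
  have hf : f = C F.coeff * linForm (F.root 0) * linForm (F.root 1) * linForm (F.root 2) *
      Q.form := by
    conv_lhs => rw [F.eq_prod, Fin.prod_univ_one, Fin.prod_univ_three]
    ring
  by_cases hb01 : Q.bilin (F.root 0) (F.root 1) = 0
  · convert hasCanonicalForm_of_three_roots_of_bilin_ne_zero F.coeff_ne_zero hQ
      (F.root_ne_zero 2) h01 ?_ ?_ using 1
    · exact hf.trans (by ring)
    · rw [bilin_comm]
      exact bilin_ne_zero_of_bilin_eq_zero hQ (F.root_ne_zero 0) h12 hb01
    · rw [bilin_comm] at hb01 ⊢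
      exact bilin_ne_zero_of_bilin_eq_zero hQ (F.root_ne_zero 1) h02 hb01
  by_cases hb02 : Q.bilin (F.root 0) (F.root 2) = 0
  · convert hasCanonicalForm_of_three_roots_of_bilin_ne_zero F.coeff_ne_zero hQ
      (F.root_ne_zero 1) h02 ?_ ?_ using 1
    · exact hf.trans (by ring)
    · rwa [bilin_comm]
    · rw [bilin_comm] at hb02 ⊢
      exact bilin_ne_zero_of_bilin_eq_zero hQ (F.root_ne_zero 2) h01 hb02
  rw [hf]
  exact hasCanonicalForm_of_three_roots_of_bilin_ne_zero F.coeff_ne_zero hQ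
    (F.root_ne_zero 0) h12 hb01 hb02

lemma hasCanonicalForm_of_neighbours (F : RealFactorization 5 0 f)
    (hF : Pairwise fun i j ↦ bracket (F.root i) (F.root j) ≠ 0)
    (hneighbour : ∀ i ≠ 0, i ≠ 1 → 0 < bracket (F.root 0) (F.root 1) *
      (bracket (F.root 0) (F.root i) * bracket (F.root 1) (F.root i))) :
    HasCanonicalForm f (X 0 ^ 2 - X 1 ^ 2) (· < 0) := by
  have h01 := hF (show (0 : Fin 5) ≠ 1 by decide)
  have h34 := hF (show (3 : Fin 5) ≠ 4 by decide)
  set Q := ofRoots (F.root 0) (F.root 1)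
  set R := ofRoots (F.root 3) (F.root 4)
  have hbilin {i k : Fin 5} (hi0 : i ≠ 0) (hi1 : i ≠ 1) (hk0 : k ≠ 0) (hk1 : k ≠ 1) :
      Q.bilin (F.root i) (F.root k) ≠ 0 := by
    refine bilin_ne_zero_of_det_neg (det_ofRoots_neg h01) ?_
    rw [bilin_ofRoots_self, bilin_ofRoots_self]
    refine pos_of_mul_pos_right ?_ (sq_nonneg (bracket (F.root 0) (F.root 1)))
    convert mul_pos (hneighbour i hi0 hi1) (hneighbour k hk0 hk1) using 1
    ring
  have hperp : R.bilin (Q.perp (F.root 2)) (Q.perp (F.root 2)) ≠ 0 := by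
    rw [bilin_ofRoots_self, bracket_perp, bracket_perp]
    exact mul_ne_zero (hbilin (by decide) (by decide) (by decide) (by decide))
      (hbilin (by decide) (by decide) (by decide) (by decide))
  have h := hasCanonicalForm_of_perp (ε := -1) (P := (· < 0)) F.coeff_ne_zero
    (div_ne_zero h01 two_ne_zero) (by rw [det_ofRoots, neg_one_mul, neg_neg])
    (hbilin (by decide) (by decide) (by decide) (by decide)) hperp
    (fun k hk ↦ mul_neg_of_pos_of_neg hk (det_ofRoots_neg h34))
  convert h using 1
  · conv_lhs => rw [F.eq_prod, Fin.prod_univ_zero, Fin.prod_univ_five]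
    rw [form_ofRoots, form_ofRoots]
    ring
  · simp [sub_eq_add_neg]

theorem hasCanonicalForm_of_five_roots (F : RealFactorization 5 0 f)
    (hF : Pairwise fun i j ↦ bracket (F.root i) (F.root j) ≠ 0) :
    HasCanonicalForm f (X 0 ^ 2 - X 1 ^ 2) (· < 0) := by
  obtain ⟨j, hj, hneighbour⟩ := exists_neighbour hF 0
  set σ := Equiv.swap 1 j
  have hσ0 : σ 0 = 0 := Equiv.swap_apply_of_ne_of_ne (by decide) hj.symm
  have hσ1 : σ 1 = j := Equiv.swap_apply_left 1 j
  set G := F.reindex σ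
  have hG : Pairwise fun i j ↦ bracket (G.root i) (G.root j) ≠ 0 :=
    fun i k hik ↦ hF (σ.injective.ne hik)
  refine G.hasCanonicalForm_of_neighbours hG fun i hi0 hi1 ↦ ?_
  have hi := hneighbour (σ i) (hσ0 ▸ σ.injective.ne hi0) (hσ1 ▸ σ.injective.ne hi1)
  change 0 < bracket (F.root (σ 0)) (F.root (σ 1)) *
    (bracket (F.root (σ 0)) (F.root (σ i)) * bracket (F.root (σ 1)) (F.root (σ i)))
  rwa [hσ0, hσ1]

end RealFactorization

end Quintic

theorem stmt7_general {f : MvPolynomial (Fin 2) ℝ} (hf : f.IsHomogeneous 5)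
    (hsimple : ∀ u, ¬ linForm u ^ 2 ∣ f) :
    ((projRoots f).ncard = 1 → HasCanonicalForm f (X 0 ^ 2 + X 1 ^ 2) (0 < ·)) ∧
    ((projRoots f).ncard = 3 → HasCanonicalForm f (X 0 ^ 2 + X 1 ^ 2) (· < 0)) ∧
    ((projRoots f).ncard = 5 → HasCanonicalForm f (X 0 ^ 2 - X 1 ^ 2) (· < 0)) := by
  have hf0 : f ≠ 0 := by
    rintro rfl
    exact hsimple 0 (dvd_zero _)
  obtain ⟨k, m, hkm, ⟨F⟩⟩ := hasRealFactorization_of_isHomogeneous hf hf0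
  have hF := F.bracket_root_ne_zero hsimple
  rw [F.ncard_projRoots hF]
  refine ⟨?_, ?_, ?_⟩ <;> rintro rfl
  · obtain rfl : m = 2 := by lia
    exact F.hasCanonicalForm_of_one_root
  · obtain rfl : m = 1 := by lia
    exact F.hasCanonicalForm_of_three_roots hF
  · obtain rfl : m = 0 := by lia
    exact F.hasCanonicalForm_of_five_roots hF

/-- canonical forms for real binary quintics with distinct roots,
according to the number of distinct real roots (1, 3, or 5). -/
theorem stmt7 (f : MvPolynomial (Fin 2) ℝ) (hf : f.IsHomogeneous 5)
    (hsf : SquarefreeC f) :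
    ((projRoots f).ncard = 1 →
      ∃ (A : Matrix (Fin 2) (Fin 2) ℝ) (lam a b : ℝ), IsUnit A.det ∧ lam ≠ 0 ∧
        0 < b - a ^ 2 ∧
        C lam * subst A f =
          X 0 * (X 0 ^ 2 + X 1 ^ 2) * (X 0 ^ 2 + C (2 * a) * X 0 * X 1 + C b * X 1 ^ 2)) ∧
    ((projRoots f).ncard = 3 →
      ∃ (A : Matrix (Fin 2) (Fin 2) ℝ) (lam a b : ℝ), IsUnit A.det ∧ lam ≠ 0 ∧
        b - a ^ 2 < 0 ∧
        C lam * subst A f =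
          X 0 * (X 0 ^ 2 + X 1 ^ 2) * (X 0 ^ 2 + C (2 * a) * X 0 * X 1 + C b * X 1 ^ 2)) ∧
    ((projRoots f).ncard = 5 →
      ∃ (A : Matrix (Fin 2) (Fin 2) ℝ) (lam a b : ℝ), IsUnit A.det ∧ lam ≠ 0 ∧
        b - a ^ 2 < 0 ∧
        C lam * subst A f =
          X 0 * (X 0 ^ 2 - X 1 ^ 2) * (X 0 ^ 2 + C (2 * a) * X 0 * X 1 + C b * X 1 ^ 2)) := by
  exact stmt7_general hf hsf.not_linForm_sq_dvd
end
end
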